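/- Let 1 < p < ∞, −1 < α < ∞, let ω be a radial weight in the class D̂, and let ν(s) = ω(s) ω̂₁(s)^α. Then the Bergman projection P_ω is bounded on L^p_ν if and only if A_p(ω,ν) < ∞, and this holds if and only if α < p − 1. -/

import Mathlib

open MeasureTheory Set Metric
open scoped ENNReal NNReal

noncomputable section

/-- `ω̂(r) = ∫_r^1 ω(s) ds`. -/
def hatw (w : ℝ → ℝ) (r : ℝ) : ℝ := ∫ s in Set.Ioo r 1, w s

/-- `ω̂₁(r) = ∫_r^1 s ω(s) ds`. -/
def hat1 (w : ℝ → ℝ) (r : ℝ) : ℝ := ∫ s in Set.Ioo r 1, s * w s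

/-- A radial weight: nonnegative, integrable on `[0,1)`, with `ω̂(r) > 0` for `0 ≤ r < 1`. -/
def IsRadialWeight (w : ℝ → ℝ) : Prop :=
  (∀ r ∈ Set.Ico (0:ℝ) 1, 0 ≤ w r) ∧ MeasureTheory.IntegrableOn w (Set.Ico (0:ℝ) 1) ∧
    ∀ r ∈ Set.Ico (0:ℝ) 1, 0 < hatw w r

/-- The class `D̂`: `sup_{0 ≤ r < 1} ω̂(r)/ω̂((1+r)/2) < ∞`. -/
def Dhat (w : ℝ → ℝ) : Prop :=
  ∃ C : ℝ, ∀ r ∈ Set.Ico (0:ℝ) 1, hatw w r ≤ C * hatw w ((1 + r) / 2)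

/-- The odd moment `ω_{2n+1} = ∫₀¹ r^{2n+1} ω(r) dr`. -/
def moment (w : ℝ → ℝ) (n : ℕ) : ℝ := ∫ r in Set.Ioo (0:ℝ) 1, r ^ (2 * n + 1) * w r

/-- The Bergman reproducing kernel `B_z^ω(ζ) = Σ_n (conj z · ζ)^n / (2 ω_{2n+1})`. -/
def Bker (w : ℝ → ℝ) (z ζ : ℂ) : ℂ :=
  ∑' n : ℕ, ((starRingEnd ℂ) z * ζ) ^ n / ((2 * moment w n : ℝ) : ℂ)

/-- The `L^p_ν` norm (with `dA` = area measure divided by `π`) of a complex-valued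
function on the unit disc. -/
def LpC (p : ℝ) (v : ℝ → ℝ) (f : ℂ → ℂ) : ℝ≥0∞ :=
  ((∫⁻ z in Metric.ball (0:ℂ) 1, ENNReal.ofReal (‖f z‖ ^ p * v ‖z‖)) /
    ENNReal.ofReal Real.pi) ^ (1 / p)

/-- The Bergman projection `P_ω(f)(z) = ∫_𝔻 f(ζ) conj(B_z^ω(ζ)) ω(ζ) dA(ζ)`. -/
def Pw (w : ℝ → ℝ) (f : ℂ → ℂ) (z : ℂ) : ℂ :=
  (∫ ζ in Metric.ball (0:ℂ) 1, f ζ * (starRingEnd ℂ) (Bker w z ζ) * ((w ‖ζ‖ : ℝ) : ℂ)) /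
    ((Real.pi : ℝ) : ℂ)

/-- `P_ω` is bounded on `L^p_ν`: for every `f ∈ L^p_ν` the defining integral converges
absolutely for a.e. `z ∈ 𝔻` and `‖P_ω f‖_{L^p_ν} ≤ C ‖f‖_{L^p_ν}`. -/
def PwBounded (p : ℝ) (w v : ℝ → ℝ) : Prop :=
  ∃ C > (0:ℝ), ∀ f : ℂ → ℂ, Measurable f → LpC p v f < ⊤ →
    (∀ᵐ z ∂(volume.restrict (Metric.ball (0:ℂ) 1)),
      (∫⁻ ζ in Metric.ball (0:ℂ) 1, ENNReal.ofReal (‖f ζ‖ * ‖Bker w z ζ‖ * w ‖ζ‖)) < ⊤) ∧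
    LpC p v (Pw w f) ≤ ENNReal.ofReal C * LpC p v f

/-- `σ(s) = (ω(s)/ν(s)^{1/p})^{p'}`, as an extended nonnegative real (so `σ(s) = ∞`
when `ν(s) = 0 < ω(s)`). -/
def sigmaE (p : ℝ) (w v : ℝ → ℝ) (s : ℝ) : ℝ≥0∞ :=
  (ENNReal.ofReal (w s) / ENNReal.ofReal (v s) ^ (1 / p)) ^ (p / (p - 1))

/-- The Muckenhoupt-type quantity
`A_p(ω,ν) = sup_{0 ≤ r < 1} ν̂₁(r)^{1/p} σ̂₁(r)^{1/p'} / ω̂₁(r)` (note `1/p' = 1 - 1/p`). -/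
def ApE (p : ℝ) (w v : ℝ → ℝ) : ℝ≥0∞ :=
  ⨆ r ∈ Set.Ico (0:ℝ) 1,
    (∫⁻ s in Set.Ioo r 1, ENNReal.ofReal (s * v s)) ^ (1 / p) *
      (∫⁻ s in Set.Ioo r 1, ENNReal.ofReal s * sigmaE p w v s) ^ (1 - 1 / p) /
      ENNReal.ofReal (hat1 w r)

section

/-- Weighted Jensen inequality. -/
lemma wJ {X : Type*} [MeasurableSpace X] (m : Measure X) {p : ℝ} (hp : 1 < p)
    {f c : X → ℝ≥0∞} (hf : AEMeasurable f m) (hc : AEMeasurable c m) :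
    (∫⁻ x, f x * c x ∂m) ^ p ≤ (∫⁻ x, f x ^ p * c x ∂m) * (∫⁻ x, c x ∂m) ^ (p - 1) := by
  have hp0 : 0 < p := by linarith
  set q := p / (p - 1) with hq
  have hp1 : 0 < p - 1 := by linarith
  have hpq : p.HolderConjugate q := by
    rw [hq]; exact Real.HolderConjugate.conjExponent hp
  have hq0 : 0 < q := hpq.symm.pos
  have h := ENNReal.lintegral_mul_le_Lp_mul_Lq m hpq
    (f := fun x => f x * c x ^ (1 / p)) (g := fun x => c x ^ (1 / q))
    (hf.mul (hc.pow_const _)) (hc.pow_const _)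
  have e1 : ∀ x, ((fun x => f x * c x ^ (1 / p)) * fun x => c x ^ (1 / q)) x = f x * c x := by
    intro x
    simp only [Pi.mul_apply]
    rw [mul_assoc, ← ENNReal.rpow_add_of_nonneg _ _ (by positivity) (by positivity)]
    have : 1 / p + 1 / q = 1 := by simpa using hpq.inv_add_inv_eq_one
    rw [this, ENNReal.rpow_one]
  have e2 : ∀ x, (f x * c x ^ (1 / p)) ^ p = f x ^ p * c x := by
    intro x
    rw [ENNReal.mul_rpow_of_nonneg _ _ hp0.le, ← ENNReal.rpow_mul]
    have : 1 / p * p = 1 := by field_simp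
    rw [this, ENNReal.rpow_one]
  have e3 : ∀ x, (c x ^ (1 / q)) ^ q = c x := by
    intro x
    rw [← ENNReal.rpow_mul]
    have : 1 / q * q = 1 := by field_simp
    rw [this, ENNReal.rpow_one]
  simp only [e1, e2, e3] at h
  calc _ ≤ _ := ENNReal.rpow_le_rpow h hp0.le
    _ = _ := by
      rw [ENNReal.mul_rpow_of_nonneg _ _ hp0.le, ← ENNReal.rpow_mul, ← ENNReal.rpow_mul]
      have h1 : 1 / p * p = 1 := by field_simp
      have h2 : 1 / q * p = p - 1 := by rw [hq]; field_simp
      rw [h1, h2, ENNReal.rpow_one]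

/-- The measure on the circle. -/
def cm : Measure ℝ := volume.restrict (Ioo (-Real.pi) Real.pi)

instance : IsFiniteMeasure cm := by
  unfold cm; infer_instance

lemma cm_univ : cm Set.univ = ENNReal.ofReal (2 * Real.pi) := by
  unfold cm
  rw [Measure.restrict_apply_univ, Real.volume_Ioo]; congr 1; ring

/-- point of the circle -/
def pt (r t : ℝ) : ℂ := (r : ℂ) * Complex.exp ((t : ℂ) * Complex.I)

lemma norm_pt (r t : ℝ) : ‖pt r t‖ = |r| := by
  simp [pt, Complex.norm_exp_ofReal_mul_I]

@[fun_prop]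
lemma continuous_pt : Continuous (fun x : ℝ × ℝ => pt x.1 x.2) := by
  unfold pt; fun_prop

lemma continuous_pt2 (r : ℝ) : Continuous (fun t : ℝ => pt r t) := by
  unfold pt; fun_prop

lemma conj_pt (r t : ℝ) : (starRingEnd ℂ) (pt r t) = pt r (-t) := by
  simp [pt, ← Complex.exp_conj]

lemma pt_mul (r s a b : ℝ) : pt r a * pt s b = pt (r * s) (a + b) := by
  simp [pt, add_mul, Complex.exp_add]; ring

lemma pt_pow (r a : ℝ) (n : ℕ) : pt r a ^ n = pt (r ^ n) (n * a) := by
  simp [pt, mul_pow, ← Complex.exp_nat_mul]; left; ring_nf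

lemma mv (H : ℂ → ℂ) (hH : DifferentiableOn ℂ H (ball 0 1)) {r : ℝ} (h0 : 0 ≤ r) (h1 : r < 1) :
    ∫ t, H (pt r t) ∂cm = 2 * Real.pi * H 0 := by
  have hd : DiffContOnCl ℂ H (ball 0 |r|) := by
    apply DifferentiableOn.diffContOnCl_ball (U := ball 0 1) hH
    exact closedBall_subset_ball (by rwa [abs_of_nonneg h0])
  have h := hd.circleAverage
  rw [Real.circleAverage_def] at h
  have hper : Function.Periodic (fun t : ℝ => H (circleMap 0 r t)) (2 * Real.pi) := by
    intro t; simp only; rw [periodic_circleMap 0 r t]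
  have h2 := hper.intervalIntegral_add_eq 0 (-Real.pi)
  rw [zero_add] at h2
  rw [h2] at h
  have h3 : ∫ t, H (pt r t) ∂cm = ∫ t in (-Real.pi)..(-Real.pi + 2 * Real.pi), H (circleMap 0 r t) := by
    rw [intervalIntegral.integral_of_le (by linarith [Real.pi_pos]), integral_Ioc_eq_integral_Ioo]
    unfold cm
    have : -Real.pi + 2 * Real.pi = Real.pi := by ring
    rw [this]
    simp [circleMap, pt]
  rw [h3, ← h]
  simp
  have : (Real.pi : ℂ) ≠ 0 := by exact_mod_cast Real.pi_ne_zero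
  field_simp

lemma re_q {x : ℂ} (hx : ‖x‖ < 1) : 1 / 2 ≤ ((1 - x)⁻¹).re := by
  have h1 : 0 < Complex.normSq (1 - x) := by
    rw [Complex.normSq_pos]; intro h
    have : x = 1 := by linear_combination -h
    rw [this] at hx; simp at hx
  rw [Complex.inv_re, le_div_iff₀ h1]
  have h2 : Complex.normSq x < 1 := by
    rw [Complex.normSq_eq_norm_sq]; nlinarith [norm_nonneg x]
  rw [Complex.normSq_apply] at *
  simp at *
  nlinarith

lemma one_sub_ne {x : ℂ} (hx : ‖x‖ < 1) : 1 - x ≠ 0 := by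
  intro h
  have : x = 1 := by linear_combination -h
  rw [this] at hx; simp at hx

lemma norm_q {x : ℂ} {r : ℝ} (hx : ‖x‖ ≤ r) (hr : r < 1) : ‖(1 - x)⁻¹‖ ≤ (1 - r)⁻¹ := by
  rw [norm_inv]
  apply inv_anti₀ (by linarith)
  have := norm_sub_norm_le (1:ℂ) x
  simp at this; linarith

/-- Cauchy-Szegő integral. -/
def Qop (r : ℝ) (g : ℝ → ℂ) (θ : ℝ) : ℂ := ∫ t, g t * (1 - pt r (θ - t))⁻¹ ∂cm

end

section

lemma cm_int {E : Type*} [NormedAddCommGroup E] {f : ℝ → E} (hf : Continuous f) :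
    Integrable f cm := by
  unfold cm
  exact (hf.integrableOn_Icc (a := -Real.pi) (b := Real.pi)).mono_set Ioo_subset_Icc_self

lemma elem_ineq {p : ℝ} (hp : 1 < p) (hp2 : p ≤ 2) : ∃ A > (0:ℝ), ∃ B > (0:ℝ), ∀ F : ℂ, 0 < F.re →
    ‖F‖ ^ p ≤ A * F.re ^ p - B * (F ^ (p : ℂ)).re := by
  set φ := Real.pi * (p + 1) / (4 * p) with hφ
  have hpi := Real.pi_pos
  have hp0 : 0 < p := by linarith
  have hφ0 : 0 < φ := by positivity
  have hφ1 : φ < Real.pi / 2 := by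
    rw [hφ, div_lt_div_iff₀ (by positivity) (by positivity)]; nlinarith
  have hpφ : p * φ = Real.pi * (p + 1) / 4 := by rw [hφ]; field_simp
  set δ := Real.cos φ with hδ
  have hδ0 : 0 < δ := Real.cos_pos_of_mem_Ioo ⟨by linarith, hφ1⟩
  set κ := - Real.cos (p * φ) with hκ
  have hκ0 : 0 < κ := by
    rw [hκ, hpφ, neg_pos]
    apply Real.cos_neg_of_pi_div_two_lt_of_lt <;> nlinarith
  refine ⟨(1 + κ⁻¹) / δ ^ p, by positivity, κ⁻¹, by positivity, ?_⟩
  intro F hF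
  have hF0 : F ≠ 0 := by rintro rfl; simp at hF
  have hn : 0 < ‖F‖ := norm_pos_iff.mpr hF0
  have harg : |Complex.arg F| < Real.pi / 2 := Complex.abs_arg_lt_pi_div_two_iff.mpr (Or.inl hF)
  have hre : F.re = ‖F‖ * Real.cos (Complex.arg F) := by
    rw [Complex.norm_mul_cos_arg]
  have hpow : (F ^ (p : ℂ)).re = ‖F‖ ^ p * Real.cos (p * Complex.arg F) := by
    rw [Complex.cpow_ofReal_re]; congr 2; ring
  have hcos : 0 < Real.cos (Complex.arg F) := by
    rw [abs_lt] at harg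
    exact Real.cos_pos_of_mem_Ioo ⟨by linarith, harg.2⟩
  rw [hpow, hre, Real.mul_rpow hn.le hcos.le]
  set a := Complex.arg F
  have key : 1 ≤ (1 + κ⁻¹) / δ ^ p * Real.cos a ^ p - κ⁻¹ * Real.cos (p * a) := by
    by_cases h : |a| ≤ φ
    · have h1 : δ ≤ Real.cos a := by
        rw [← Real.cos_abs a, hδ]
        exact Real.cos_le_cos_of_nonneg_of_le_pi (abs_nonneg _) (by linarith) h
      have h2 : δ ^ p ≤ Real.cos a ^ p := Real.rpow_le_rpow hδ0.le h1 hp0.le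
      have h3 : (1 + κ⁻¹) ≤ (1 + κ⁻¹) / δ ^ p * Real.cos a ^ p := by
        rw [div_mul_eq_mul_div, le_div_iff₀ (by positivity)]
        gcongr
      have h4 : κ⁻¹ * Real.cos (p * a) ≤ κ⁻¹ * 1 := by
        gcongr; exact Real.cos_le_one _
      linarith
    · push Not at h
      have h1 : Real.cos (p * a) ≤ - κ := by
        rw [hκ, neg_neg, ← Real.cos_abs (p * a), abs_mul, abs_of_pos hp0]
        apply Real.cos_le_cos_of_nonneg_of_le_pi (by positivity)
        · nlinarith
        · gcongr
      have h2 : κ⁻¹ * Real.cos (p * a) ≤ κ⁻¹ * (-κ) := by gcongr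
      have h3 : κ⁻¹ * (-κ) = -1 := by field_simp
      have : 0 ≤ (1 + κ⁻¹) / δ ^ p * Real.cos a ^ p := by positivity
      linarith
  have := mul_le_mul_of_nonneg_left key (Real.rpow_nonneg hn.le p)
  linarith

/-- The Cauchy transform on the disc. -/
def Cau (g : ℝ → ℂ) (z : ℂ) : ℂ := ∫ t, g t * (1 - z * pt 1 (-t))⁻¹ ∂cm

lemma Qop_eq (r : ℝ) (g : ℝ → ℂ) (θ : ℝ) : Qop r g θ = Cau g (pt r θ) := by
  unfold Qop Cau
  congr 1; ext t
  rw [pt_mul, mul_one, sub_eq_add_neg θ t]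

lemma Cau_int {g : ℝ → ℂ} (hg : Integrable g cm) {z : ℂ} (hz : ‖z‖ < 1) :
    Integrable (fun t => g t * (1 - z * pt 1 (-t))⁻¹) cm := by
  have hn : ∀ t, ‖z * pt 1 (-t)‖ = ‖z‖ := by intro t; simp [norm_pt]
  apply hg.mul_bdd (c := (1 - ‖z‖)⁻¹)
  · apply Continuous.aestronglyMeasurable
    apply Continuous.inv₀
    · exact continuous_const.sub (continuous_const.mul ((continuous_pt2 1).comp continuous_neg))
    · intro t; exact one_sub_ne (by rw [hn]; exact hz)
  · exact Filter.Eventually.of_forall fun t => norm_q (hn t).le hz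

lemma Cau_diff {g : ℝ → ℂ} (hg : Integrable g cm) : DifferentiableOn ℂ (Cau g) (ball 0 1) := by
  intro z hz
  rw [mem_ball_zero_iff] at hz
  apply DifferentiableAt.differentiableWithinAt
  obtain ⟨R, hR1, hR2⟩ := exists_between hz
  have hn : ∀ (y : ℂ) t, ‖y * pt 1 (-t)‖ = ‖y‖ := by intro y t; simp [norm_pt]
  have hR0 : 0 ≤ R := (norm_nonneg z).trans hR1.le
  have hs : ball (0:ℂ) R ∈ nhds z := isOpen_ball.mem_nhds (by rwa [mem_ball_zero_iff])
  have hcont : ∀ y : ℂ, ‖y‖ < 1 → Continuous fun t => (1 - y * pt 1 (-t))⁻¹ := by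
    intro y hy
    apply Continuous.inv₀
    · exact continuous_const.sub (continuous_const.mul ((continuous_pt2 1).comp continuous_neg))
    · intro t; exact one_sub_ne (by rw [hn]; exact hy)
  have := hasDerivAt_integral_of_dominated_loc_of_deriv_le (μ := cm) (𝕜 := ℂ) (x₀ := z)
    (F := fun y t => g t * (1 - y * pt 1 (-t))⁻¹)
    (F' := fun y t => g t * (pt 1 (-t) * ((1 - y * pt 1 (-t))⁻¹) ^ 2))
    (bound := fun t => ‖g t‖ * ((1 - R)⁻¹) ^ 2) hs ?_ (Cau_int hg hz) ?_ ?_ ?_ ?_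
  · exact this.2.differentiableAt
  · filter_upwards [hs] with y hy
    rw [mem_ball_zero_iff] at hy
    exact (Cau_int hg (hy.trans hR2)).1
  · apply hg.1.mul
    apply Continuous.aestronglyMeasurable
    exact ((continuous_pt2 1).comp continuous_neg).mul ((hcont z hz).pow 2)
  · refine Filter.Eventually.of_forall fun t y hy => ?_
    rw [mem_ball_zero_iff] at hy
    rw [norm_mul, norm_mul, norm_pt, abs_one, one_mul, norm_pow]
    gcongr
    exact norm_q ((hn y t).le.trans hy.le) hR2
  · exact hg.norm.mul_const _
  · refine Filter.Eventually.of_forall fun t y hy => ?_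
    rw [mem_ball_zero_iff] at hy
    apply HasDerivAt.const_mul
    have h1 : HasDerivAt (fun y : ℂ => 1 - y * pt 1 (-t)) (-pt 1 (-t)) y := by
      simpa using ((hasDerivAt_id y).mul_const (pt 1 (-t))).const_sub 1
    have hne := one_sub_ne (x := y * pt 1 (-t)) (by rw [hn]; linarith)
    refine (h1.inv hne).congr_deriv ?_
    rw [neg_neg, inv_pow, div_eq_mul_inv]

lemma Qop_cont {g : ℝ → ℂ} (hg : Integrable g cm) {r : ℝ} (h0 : 0 ≤ r) (h1 : r < 1) :
    Continuous (Qop r g) := by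
  have : Qop r g = fun θ => Cau g (pt r θ) := by ext θ; exact Qop_eq r g θ
  rw [this]
  exact (Cau_diff hg).continuousOn.comp_continuous (continuous_pt2 r)
    (fun θ => by rw [mem_ball_zero_iff, norm_pt, abs_of_nonneg h0]; exact h1)

/-- real kernel -/
def kr (r θ t : ℝ) : ℝ := ((1 - pt r (θ - t))⁻¹).re

lemma kr_symm (r θ t : ℝ) : kr r θ t = kr r t θ := by
  unfold kr
  rw [← Complex.conj_re, map_inv₀, map_sub, conj_pt, map_one, neg_sub]

lemma kr_cont {r : ℝ} (h0 : 0 ≤ r) (h1 : r < 1) : Continuous (fun x : ℝ × ℝ => kr r x.1 x.2) := by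
  unfold kr
  apply Complex.continuous_re.comp
  apply Continuous.inv₀
  · exact continuous_const.sub ((continuous_pt2 r).comp (continuous_fst.sub continuous_snd))
  · intro t; exact one_sub_ne (by rw [norm_pt, abs_of_nonneg h0]; exact h1)

lemma kr_pos {r : ℝ} (h0 : 0 ≤ r) (h1 : r < 1) (θ t : ℝ) : 1 / 2 ≤ kr r θ t :=
  re_q (by rw [norm_pt, abs_of_nonneg h0]; exact h1)

lemma kr_lint {r : ℝ} (h0 : 0 ≤ r) (h1 : r < 1) (t : ℝ) :
    ∫⁻ θ, ENNReal.ofReal (kr r θ t) ∂cm = ENNReal.ofReal (2 * Real.pi) := by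
  have hc : Continuous (fun θ => kr r θ t) :=
    Continuous.comp (g := fun x : ℝ × ℝ => kr r x.1 x.2) (f := fun θ => (θ, t))
      (kr_cont h0 h1) (by fun_prop)
  have hnn : ∀ θ, (0:ℝ) ≤ kr r θ t := fun θ => le_trans (by norm_num) (kr_pos h0 h1 θ t)
  rw [← ofReal_integral_eq_lintegral_ofReal (cm_int hc)
    (Filter.Eventually.of_forall hnn)]
  congr 1
  have hmv := mv (fun z => (1 - z * pt 1 (-t))⁻¹) (by
    apply DifferentiableOn.inv
    · fun_prop
    · intro z hz
      rw [mem_ball_zero_iff] at hz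
      exact one_sub_ne (by simpa [norm_pt] using hz)) h0 h1
  have h2 : ∀ θ, (1 - pt r θ * pt 1 (-t))⁻¹ = (1 - pt r (θ - t))⁻¹ := by
    intro θ; rw [pt_mul, mul_one, sub_eq_add_neg θ t]
  simp only [h2] at hmv
  have hc2 : Continuous (fun θ => (1 - pt r (θ - t))⁻¹) := by
    apply Continuous.inv₀
    · exact continuous_const.sub ((continuous_pt2 r).comp (continuous_id.sub continuous_const))
    · intro t; exact one_sub_ne (by rw [norm_pt, abs_of_nonneg h0]; exact h1)
  have h3 := congrArg Complex.re hmv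
  have h4 := integral_re (cm_int hc2) (𝕜 := ℂ)
  simp only [RCLike.re_eq_complex_re] at h4
  unfold kr
  rw [h4, h3]
  simp

end

section

lemma Q_re {g : ℝ → ℝ} (hgi : Integrable g cm) {r : ℝ} (h0 : 0 ≤ r) (h1 : r < 1) (θ : ℝ) :
    Integrable (fun t => g t * kr r θ t) cm ∧
    (Qop r (fun t => (g t : ℂ)) θ).re = ∫ t, g t * kr r θ t ∂cm := by
  have hz : ‖pt r θ‖ < 1 := by rwa [norm_pt, abs_of_nonneg h0]
  have hi := Cau_int (g := fun t => (g t : ℂ)) hgi.ofReal hz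
  have he : ∀ t, (((g t : ℂ) * (1 - pt r θ * pt 1 (-t))⁻¹)).re = g t * kr r θ t := by
    intro t
    rw [pt_mul, mul_one, ← sub_eq_add_neg, Complex.re_ofReal_mul, kr]
  refine ⟨?_, ?_⟩
  · have := hi.re
    simp only [RCLike.re_eq_complex_re, he] at this
    exact this
  · rw [Qop_eq, Cau]
    have h4 := integral_re hi (𝕜 := ℂ)
    simp only [RCLike.re_eq_complex_re, he] at h4
    exact h4.symm

lemma Q_pos_real {p : ℝ} (hp : 1 < p) {A B : ℝ} (hB : 0 < B)
    (hAB : ∀ F : ℂ, 0 < F.re → ‖F‖ ^ p ≤ A * F.re ^ p - B * (F ^ (p : ℂ)).re)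
    {g : ℝ → ℝ} (hg0 : ∀ t, 0 ≤ g t) (hgi : Integrable g cm) (hpos : 0 < ∫ t, g t ∂cm)
    {r : ℝ} (h0 : 0 ≤ r) (h1 : r < 1) :
    ∫ θ, ‖Qop r (fun t => (g t : ℂ)) θ‖ ^ p ∂cm ≤
      A * ∫ θ, (Qop r (fun t => (g t : ℂ)) θ).re ^ p ∂cm := by
  have hp0 : 0 < p := by linarith
  set gc : ℝ → ℂ := fun t => (g t : ℂ) with hgc
  have hgci : Integrable gc cm := hgi.ofReal
  have hre : ∀ z : ℂ, ‖z‖ < 1 → 0 < (Cau gc z).re := by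
    intro z hz
    have hn : ∀ t, ‖z * pt 1 (-t)‖ = ‖z‖ := by intro t; simp [norm_pt]
    have hi := Cau_int hgci hz
    have he : ∀ t, ((gc t * (1 - z * pt 1 (-t))⁻¹)).re = g t * ((1 - z * pt 1 (-t))⁻¹).re := by
      intro t; rw [hgc, Complex.re_ofReal_mul]
    have h4 := integral_re hi (𝕜 := ℂ)
    have h5 := hi.re
    simp only [RCLike.re_eq_complex_re, he] at h4 h5
    have h6 : ∫ t, g t * (1 / 2) ∂cm ≤ ∫ t, g t * ((1 - z * pt 1 (-t))⁻¹).re ∂cm := by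
      apply integral_mono (hgi.mul_const _) h5
      intro t
      exact mul_le_mul_of_nonneg_left (re_q (by rw [hn]; exact hz)) (hg0 t)
    rw [integral_mul_const] at h6
    unfold Cau
    rw [← h4]
    linarith
  have hd := Cau_diff hgci
  have hmv := mv (fun z => Cau gc z ^ (p : ℂ)) (by
    apply hd.cpow_const
    intro z hz
    rw [mem_ball_zero_iff] at hz
    exact Or.inl (hre z hz)) h0 h1
  have hz : ∀ θ, ‖pt r θ‖ < 1 := fun θ => by rwa [norm_pt, abs_of_nonneg h0]
  have hQre : ∀ θ, 0 < (Qop r gc θ).re := fun θ => by rw [Qop_eq]; exact hre _ (hz θ)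
  have hQc : Continuous (Qop r gc) := Qop_cont hgci h0 h1
  have hc1 : Continuous fun θ => Qop r gc θ ^ (p : ℂ) := by
    exact hQc.cpow continuous_const (fun θ => Or.inl (hQre θ))
  have hc2 : Continuous fun θ => ‖Qop r gc θ‖ ^ p :=
    hQc.norm.rpow_const (fun _ => Or.inr hp0.le)
  have hc3 : Continuous fun θ => (Qop r gc θ).re ^ p :=
    (Complex.continuous_re.comp hQc).rpow_const (fun _ => Or.inr hp0.le)
  have hc4 : Continuous fun θ => (Qop r gc θ ^ (p : ℂ)).re := Complex.continuous_re.comp hc1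
  have h4 := integral_re (cm_int hc1) (𝕜 := ℂ)
  simp only [RCLike.re_eq_complex_re] at h4
  simp only [← Qop_eq] at hmv
  rw [hmv] at h4
  have hC0 : Cau gc 0 = ((∫ t, g t ∂cm : ℝ) : ℂ) := by
    unfold Cau
    simp [hgc]
    exact integral_ofReal
  have h5 : 0 ≤ ∫ θ, (Qop r gc θ ^ (p : ℂ)).re ∂cm := by
    rw [h4, hC0, ← Complex.ofReal_cpow hpos.le]
    have : (2 * (Real.pi:ℂ) * ((((∫ t, g t ∂cm) ^ p : ℝ)) : ℂ)).re = 2 * Real.pi * (∫ t, g t ∂cm) ^ p := by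
      norm_cast
    rw [this]
    have := Real.pi_pos
    positivity
  calc _ ≤ ∫ θ, (A * (Qop r gc θ).re ^ p - B * (Qop r gc θ ^ (p : ℂ)).re) ∂cm := by
        apply integral_mono (cm_int hc2)
        · exact ((cm_int hc3).const_mul A).sub ((cm_int hc4).const_mul B)
        · intro θ; exact hAB _ (hQre θ)
    _ = A * ∫ θ, (Qop r gc θ).re ^ p ∂cm - B * ∫ θ, (Qop r gc θ ^ (p : ℂ)).re ∂cm := by
        rw [integral_sub ((cm_int hc3).const_mul A) ((cm_int hc4).const_mul B),
          integral_const_mul, integral_const_mul]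
    _ ≤ _ := by nlinarith

lemma poisson_bd {p : ℝ} (hp : 1 < p) {g : ℝ → ℝ} (hgm : Measurable g) (hg0 : ∀ t, 0 ≤ g t)
    (hgi : Integrable g cm) {r : ℝ} (h0 : 0 ≤ r) (h1 : r < 1) :
    ∫⁻ θ, ENNReal.ofReal ((Qop r (fun t => (g t : ℂ)) θ).re) ^ p ∂cm ≤
      ENNReal.ofReal (2 * Real.pi) ^ p * ∫⁻ t, ENNReal.ofReal (g t) ^ p ∂cm := by
  have hp0 : 0 < p := by linarith
  have hkm : Measurable (fun x : ℝ × ℝ => ENNReal.ofReal (kr r x.1 x.2)) :=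
    (kr_cont h0 h1).measurable.ennreal_ofReal
  have hknn : ∀ θ t, 0 ≤ kr r θ t := fun θ t => le_trans (by norm_num) (kr_pos h0 h1 θ t)
  have hpt : ∀ θ, ENNReal.ofReal ((Qop r (fun t => (g t : ℂ)) θ).re) ^ p ≤
      (∫⁻ t, ENNReal.ofReal (g t) ^ p * ENNReal.ofReal (kr r θ t) ∂cm) *
        ENNReal.ofReal (2 * Real.pi) ^ (p - 1) := by
    intro θ
    obtain ⟨hi, he⟩ := Q_re hgi h0 h1 θ
    rw [he, ofReal_integral_eq_lintegral_ofReal hi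
      (Filter.Eventually.of_forall fun t => mul_nonneg (hg0 t) (hknn θ t))]
    have hsplit : ∀ t, ENNReal.ofReal (g t * kr r θ t) =
        ENNReal.ofReal (g t) * ENNReal.ofReal (kr r θ t) := fun t => ENNReal.ofReal_mul (hg0 t)
    simp only [hsplit]
    have hw := wJ cm hp (f := fun t => ENNReal.ofReal (g t))
      (c := fun t => ENNReal.ofReal (kr r θ t)) hgm.ennreal_ofReal.aemeasurable
      (Measurable.comp (g := fun x : ℝ × ℝ => ENNReal.ofReal (kr r x.1 x.2))
              (f := fun t => (θ, t)) hkm (by fun_prop)).aemeasurable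
    have hk : ∫⁻ t, ENNReal.ofReal (kr r θ t) ∂cm = ENNReal.ofReal (2 * Real.pi) := by
      rw [← kr_lint h0 h1 θ]
      congr 1; ext t; rw [kr_symm]
    rw [hk] at hw
    exact hw
  calc _ ≤ ∫⁻ θ, (∫⁻ t, ENNReal.ofReal (g t) ^ p * ENNReal.ofReal (kr r θ t) ∂cm) *
        ENNReal.ofReal (2 * Real.pi) ^ (p - 1) ∂cm := lintegral_mono hpt
    _ = (∫⁻ θ, ∫⁻ t, ENNReal.ofReal (g t) ^ p * ENNReal.ofReal (kr r θ t) ∂cm ∂cm) *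
        ENNReal.ofReal (2 * Real.pi) ^ (p - 1) :=
        lintegral_mul_const' _ _ (ENNReal.rpow_ne_top_of_nonneg (by linarith) ENNReal.ofReal_ne_top)
    _ = (∫⁻ t, ENNReal.ofReal (g t) ^ p * ENNReal.ofReal (2 * Real.pi) ∂cm) *
        ENNReal.ofReal (2 * Real.pi) ^ (p - 1) := by
        congr 1
        rw [lintegral_lintegral_swap]
        · congr 1; ext t
          have hm : Measurable (fun θ => ENNReal.ofReal (kr r θ t)) :=
            Measurable.comp (g := fun x : ℝ × ℝ => ENNReal.ofReal (kr r x.1 x.2))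
              (f := fun θ => (θ, t)) hkm (by fun_prop)
          rw [lintegral_const_mul _ hm, kr_lint h0 h1]
        · apply Measurable.aemeasurable
          exact ((hgm.ennreal_ofReal.pow_const p).comp measurable_snd).mul hkm
    _ = _ := by
        rw [lintegral_mul_const' _ _ ENNReal.ofReal_ne_top, mul_assoc]
        have : ENNReal.ofReal (2 * Real.pi) ^ p =
          ENNReal.ofReal (2 * Real.pi) * ENNReal.ofReal (2 * Real.pi) ^ (p - 1) := by
          conv_rhs => rw [← ENNReal.rpow_one (ENNReal.ofReal (2 * Real.pi)), ← ENNReal.rpow_mul, one_mul]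
          rw [← ENNReal.rpow_add_of_nonneg _ _ (by norm_num) (by linarith)]
          congr 1; ring
        rw [this, mul_comm]

lemma Q_pos {p : ℝ} (hp : 1 < p) (hp2 : p ≤ 2) : ∃ C : ℝ≥0, ∀ g : ℝ → ℝ, Measurable g →
    (∀ t, 0 ≤ g t) → Integrable g cm → ∀ r : ℝ, 0 ≤ r → r < 1 →
    ∫⁻ θ, ‖Qop r (fun t => (g t : ℂ)) θ‖ₑ ^ p ∂cm ≤ C * ∫⁻ t, ‖(g t : ℂ)‖ₑ ^ p ∂cm := by
  obtain ⟨A, hA, B, hB, hAB⟩ := elem_ineq hp hp2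
  have hp0 : 0 < p := by linarith
  have hfin : ENNReal.ofReal A * ENNReal.ofReal (2 * Real.pi) ^ p ≠ ⊤ :=
    ENNReal.mul_ne_top ENNReal.ofReal_ne_top
      (ENNReal.rpow_ne_top_of_nonneg hp0.le ENNReal.ofReal_ne_top)
  refine ⟨(ENNReal.ofReal A * ENNReal.ofReal (2 * Real.pi) ^ p).toNNReal, ?_⟩
  intro g hgm hg0 hgi r h0 h1
  rw [ENNReal.coe_toNNReal hfin]
  set gc : ℝ → ℂ := fun t => (g t : ℂ) with hgc
  have hgci : Integrable gc cm := hgi.ofReal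
  have hnn : 0 ≤ ∫ t, g t ∂cm := integral_nonneg hg0
  rcases hnn.eq_or_lt with hz | hpos
  · have hae : g =ᵐ[cm] 0 := (integral_eq_zero_iff_of_nonneg hg0 hgi).1 hz.symm
    have : ∀ θ, Qop r gc θ = 0 := by
      intro θ
      unfold Qop
      apply integral_eq_zero_of_ae
      filter_upwards [hae] with t ht
      simp [hgc, ht]
    simp [this, hp0]
  · have h := Q_pos_real hp hB hAB hg0 hgi hpos h0 h1
    have hQc : Continuous (Qop r gc) := Qop_cont hgci h0 h1
    have hc2 : Continuous fun θ => ‖Qop r gc θ‖ ^ p :=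
      hQc.norm.rpow_const (fun _ => Or.inr hp0.le)
    have hc3 : Continuous fun θ => (Qop r gc θ).re ^ p :=
      (Complex.continuous_re.comp hQc).rpow_const (fun _ => Or.inr hp0.le)
    have hre : ∀ θ, 0 ≤ (Qop r gc θ).re := by
      intro θ
      rw [(Q_re hgi h0 h1 θ).2]
      exact integral_nonneg fun t => mul_nonneg (hg0 t)
        (le_trans (by norm_num) (kr_pos h0 h1 θ t))
    have e1 : ∫⁻ θ, ‖Qop r gc θ‖ₑ ^ p ∂cm = ENNReal.ofReal (∫ θ, ‖Qop r gc θ‖ ^ p ∂cm) := by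
      rw [ofReal_integral_eq_lintegral_ofReal (cm_int hc2)
        (Filter.Eventually.of_forall fun θ => by positivity)]
      congr 1; ext θ
      rw [← ENNReal.ofReal_rpow_of_nonneg (norm_nonneg _) hp0.le, ofReal_norm]
    have e2 : ENNReal.ofReal (∫ θ, (Qop r gc θ).re ^ p ∂cm) =
        ∫⁻ θ, ENNReal.ofReal ((Qop r gc θ).re) ^ p ∂cm := by
      rw [ofReal_integral_eq_lintegral_ofReal (cm_int hc3)
        (Filter.Eventually.of_forall fun θ => Real.rpow_nonneg (hre θ) p)]
      congr 1; ext θ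
      rw [← ENNReal.ofReal_rpow_of_nonneg (hre θ) hp0.le]
    have e3 : ∀ t, ‖(g t : ℂ)‖ₑ = ENNReal.ofReal (g t) := by
      intro t
      rw [← ofReal_norm, Complex.norm_real, Real.norm_of_nonneg (hg0 t)]
    rw [e1]
    calc _ ≤ ENNReal.ofReal (A * ∫ θ, (Qop r gc θ).re ^ p ∂cm) := ENNReal.ofReal_le_ofReal h
      _ = ENNReal.ofReal A * ∫⁻ θ, ENNReal.ofReal ((Qop r gc θ).re) ^ p ∂cm := by
        rw [ENNReal.ofReal_mul hA.le, e2]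
      _ ≤ _ := by
        rw [mul_assoc]
        gcongr
        simp only [hgc, e3]
        exact poisson_bd hp hgm hg0 hgi h0 h1

end

section

lemma Q_int {g : ℝ → ℂ} (hg : Integrable g cm) {r : ℝ} (h0 : 0 ≤ r) (h1 : r < 1) (θ : ℝ) :
    Integrable (fun t => g t * (1 - pt r (θ - t))⁻¹) cm := by
  have := Cau_int hg (z := pt r θ) (by rwa [norm_pt, abs_of_nonneg h0])
  simpa only [pt_mul, mul_one, ← sub_eq_add_neg] using this

lemma Q_lin {g₁ g₂ : ℝ → ℂ} (hg₁ : Integrable g₁ cm) (hg₂ : Integrable g₂ cm) (c : ℂ)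
    {r : ℝ} (h0 : 0 ≤ r) (h1 : r < 1) (θ : ℝ) :
    Qop r (fun t => g₁ t + c * g₂ t) θ = Qop r g₁ θ + c * Qop r g₂ θ := by
  unfold Qop
  rw [← integral_const_mul, ← integral_add (Q_int hg₁ h0 h1 θ) ((Q_int hg₂ h0 h1 θ).const_mul c)]
  congr 1; ext t; ring

lemma Q_lin_p {p : ℝ} (hp : 1 < p) {g₁ g₂ : ℝ → ℂ} (hg₁ : Integrable g₁ cm)
    (hg₂ : Integrable g₂ cm) {c : ℂ} (hc : ‖c‖ = 1)
    {r : ℝ} (h0 : 0 ≤ r) (h1 : r < 1) :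
    ∫⁻ θ, ‖Qop r (fun t => g₁ t + c * g₂ t) θ‖ₑ ^ p ∂cm ≤
      2 ^ (p - 1) * (∫⁻ θ, ‖Qop r g₁ θ‖ₑ ^ p ∂cm + ∫⁻ θ, ‖Qop r g₂ θ‖ₑ ^ p ∂cm) := by
  have hm : Measurable fun θ => ‖Qop r g₁ θ‖ₑ ^ p :=
    (Qop_cont hg₁ h0 h1).measurable.enorm.pow_const p
  rw [← lintegral_add_left hm, ← lintegral_const_mul' _ _
    (ENNReal.rpow_ne_top_of_nonneg (by linarith) (by norm_num))]
  apply lintegral_mono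
  intro θ
  simp only
  rw [Q_lin hg₁ hg₂ c h0 h1]
  have h2 : ‖Qop r g₁ θ + c * Qop r g₂ θ‖ₑ ≤ ‖Qop r g₁ θ‖ₑ + ‖Qop r g₂ θ‖ₑ := by
    refine (enorm_add_le _ _).trans ?_
    rw [enorm_mul]
    have : ‖c‖ₑ = 1 := by rw [← ofReal_norm, hc]; simp
    rw [this, one_mul]
  exact (ENNReal.rpow_le_rpow h2 (by linarith)).trans
    (ENNReal.rpow_add_le_mul_rpow_add_rpow _ _ hp.le)

lemma Q_real {p : ℝ} (hp : 1 < p) (hp2 : p ≤ 2) : ∃ C : ℝ≥0, ∀ g : ℝ → ℝ, Measurable g →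
    Integrable g cm → ∀ r : ℝ, 0 ≤ r → r < 1 →
    ∫⁻ θ, ‖Qop r (fun t => (g t : ℂ)) θ‖ₑ ^ p ∂cm ≤ C * ∫⁻ t, ‖(g t : ℂ)‖ₑ ^ p ∂cm := by
  obtain ⟨C, hC⟩ := Q_pos hp hp2
  refine ⟨(2 : ℝ≥0) ^ (p - 1) * (C + C), ?_⟩
  intro g hgm hgi r h0 h1
  have hp0 : 0 < p := by linarith
  have hgi' : Integrable (fun t => max (-g t) 0) cm := hgi.neg.pos_part
  have hgi'' : Integrable (fun t => max (g t) 0) cm := hgi.pos_part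
  have a1 := hC (fun t => max (g t) 0) (hgm.max measurable_const) (fun t => le_max_right _ _)
    hgi'' r h0 h1
  have a2 := hC (fun t => max (-g t) 0) (hgm.neg.max measurable_const) (fun t => le_max_right _ _)
    hgi' r h0 h1
  have a3 := Q_lin_p hp (g₁ := fun t => ((max (g t) 0 : ℝ) : ℂ))
    (g₂ := fun t => ((max (-g t) 0 : ℝ) : ℂ)) hgi''.ofReal hgi'.ofReal (c := -1) (by simp) h0 h1
  have e : (fun t => ((max (g t) 0 : ℝ) : ℂ) + -1 * ((max (-g t) 0 : ℝ) : ℂ)) =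
      fun t => (g t : ℂ) := by
    ext t
    rw [neg_one_mul, ← sub_eq_add_neg, ← Complex.ofReal_sub]
    congr 1
    rcases le_total 0 (g t) with h | h <;> simp [h]
  rw [e] at a3
  refine a3.trans ?_
  push_cast
  rw [ENNReal.coe_rpow_of_nonneg _ (by linarith), mul_assoc, add_mul]
  push_cast
  gcongr
  · refine a1.trans ?_
    gcongr with t
    rw [← ofReal_norm, ← ofReal_norm]
    apply ENNReal.ofReal_le_ofReal
    rw [Complex.norm_real, Complex.norm_real, Real.norm_eq_abs, Real.norm_eq_abs,
      abs_of_nonneg (le_max_right _ _)]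
    exact max_le (le_abs_self _) (abs_nonneg _)
  · refine a2.trans ?_
    gcongr with t
    rw [← ofReal_norm, ← ofReal_norm]
    apply ENNReal.ofReal_le_ofReal
    rw [Complex.norm_real, Complex.norm_real, Real.norm_eq_abs, Real.norm_eq_abs,
      abs_of_nonneg (le_max_right _ _)]
    exact max_le (neg_le_abs _) (abs_nonneg _)

lemma Q_le2 {p : ℝ} (hp : 1 < p) (hp2 : p ≤ 2) : ∃ C : ℝ≥0, ∀ g : ℝ → ℂ, Measurable g →
    Integrable g cm → ∀ r : ℝ, 0 ≤ r → r < 1 →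
    ∫⁻ θ, ‖Qop r g θ‖ₑ ^ p ∂cm ≤ C * ∫⁻ t, ‖g t‖ₑ ^ p ∂cm := by
  obtain ⟨C, hC⟩ := Q_real hp hp2
  refine ⟨(2 : ℝ≥0) ^ (p - 1) * (C + C), ?_⟩
  intro g hgm hgi r h0 h1
  have hp0 : 0 < p := by linarith
  have hgi' : Integrable (fun t => (g t).re) cm := hgi.re
  have hgi'' : Integrable (fun t => (g t).im) cm := hgi.im
  have a1 := hC _ (Complex.measurable_re.comp hgm) hgi' r h0 h1
  have a2 := hC _ (Complex.measurable_im.comp hgm) hgi'' r h0 h1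
  have a3 := Q_lin_p hp (g₁ := fun t => ((g t).re : ℂ))
    (g₂ := fun t => ((g t).im : ℂ)) hgi'.ofReal hgi''.ofReal (c := Complex.I) (by simp) h0 h1
  have e : (fun t => ((g t).re : ℂ) + Complex.I * ((g t).im : ℂ)) = g := by
    ext t
    rw [mul_comm]; exact Complex.re_add_im (g t)
  rw [e] at a3
  refine a3.trans ?_
  push_cast
  rw [ENNReal.coe_rpow_of_nonneg _ (by linarith), mul_assoc, add_mul]
  push_cast
  gcongr
  · refine a1.trans ?_
    gcongr with t
    rw [← ofReal_norm, ← ofReal_norm]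
    apply ENNReal.ofReal_le_ofReal
    rw [Complex.norm_real, Real.norm_eq_abs]
    exact Complex.abs_re_le_norm _
  · refine a2.trans ?_
    gcongr with t
    rw [← ofReal_norm, ← ofReal_norm]
    apply ENNReal.ofReal_le_ofReal
    rw [Complex.norm_real, Real.norm_eq_abs]
    exact Complex.abs_im_le_norm _

lemma Q_dual {p q : ℝ} (hpq : p.HolderConjugate q) {C : ℝ≥0}
    (hC : ∀ g : ℝ → ℂ, Measurable g → Integrable g cm → ∀ r : ℝ, 0 ≤ r → r < 1 →
      ∫⁻ θ, ‖Qop r g θ‖ₑ ^ q ∂cm ≤ C * ∫⁻ t, ‖g t‖ₑ ^ q ∂cm)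
    {g : ℝ → ℂ} (hgm : Measurable g) (hgi : Integrable g cm) {r : ℝ} (h0 : 0 ≤ r) (h1 : r < 1) :
    ∫⁻ θ, ‖Qop r g θ‖ₑ ^ p ∂cm ≤ (C : ℝ≥0∞) ^ (p / q) * ∫⁻ t, ‖g t‖ₑ ^ p ∂cm := by
  have hp0 : 0 < p := hpq.pos
  have hq0 : 0 < q := hpq.symm.pos
  have hp1 : 1 < p := hpq.lt
  set T := Qop r g with hT
  have hTc : Continuous T := Qop_cont hgi h0 h1
  -- test function
  set k : ℝ → ℂ := fun θ => ((‖T θ‖ ^ (p - 2) : ℝ) : ℂ) * T θ with hk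
  have hkm : Measurable k := by
    apply Measurable.mul _ hTc.measurable
    exact Complex.measurable_ofReal.comp (hTc.measurable.norm.pow_const _)
  have hkn : ∀ θ, ‖k θ‖ = ‖T θ‖ ^ (p - 1) := by
    intro θ
    rw [hk]; simp only
    rw [norm_mul, Complex.norm_real, Real.norm_of_nonneg (by positivity)]
    rcases (norm_nonneg (T θ)).eq_or_lt with h | h
    · rw [← h, mul_zero, Real.zero_rpow (by linarith)]
    · conv_lhs => rw [← Real.rpow_one ‖T θ‖, ← Real.rpow_mul h.le, one_mul, ← Real.rpow_add h]
      congr 1; ring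
  have hTk : ∀ θ, T θ * (starRingEnd ℂ) (k θ) = ((‖T θ‖ ^ p : ℝ) : ℂ) := by
    intro θ
    rw [hk]; simp only [map_mul, Complex.conj_ofReal]
    rw [mul_left_comm, Complex.mul_conj, Complex.normSq_eq_norm_sq, ← Complex.ofReal_mul]
    congr 1
    rcases (norm_nonneg (T θ)).eq_or_lt with h | h
    · rw [← h, Real.zero_rpow hp0.ne']; simp
    · rw [← Real.rpow_natCast, ← Real.rpow_add h]; congr 1; push_cast; ring
  have hc2 : Continuous fun θ => ‖T θ‖ ^ p :=
    hTc.norm.rpow_const (fun _ => Or.inr hp0.le)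
  have hc3 : Continuous fun θ => ‖T θ‖ ^ (p - 1) :=
    hTc.norm.rpow_const (fun _ => Or.inr (by linarith))
  have hki : Integrable k cm := by
    refine Integrable.mono' (cm_int hc3) hkm.aestronglyMeasurable
      (Filter.Eventually.of_forall fun θ => (hkn θ).le)
  set S := ∫⁻ θ, ‖T θ‖ₑ ^ p ∂cm with hS
  have e1 : S = ENNReal.ofReal (∫ θ, ‖T θ‖ ^ p ∂cm) := by
    rw [ofReal_integral_eq_lintegral_ofReal (cm_int hc2)
      (Filter.Eventually.of_forall fun θ => by positivity), hS]
    congr 1; ext θ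
    rw [← ENNReal.ofReal_rpow_of_nonneg (norm_nonneg _) hp0.le, ofReal_norm]
  have hSfin : S ≠ ⊤ := by rw [e1]; exact ENNReal.ofReal_ne_top
  -- norm of k
  have e2 : ∫⁻ θ, ‖k θ‖ₑ ^ q ∂cm = S := by
    rw [hS]; congr 1; ext θ
    rw [← ofReal_norm, hkn, ← ofReal_norm, ENNReal.ofReal_rpow_of_nonneg (by positivity) hq0.le,
      ENNReal.ofReal_rpow_of_nonneg (by positivity) hp0.le, ← Real.rpow_mul (norm_nonneg _)]
    congr 2
    exact hpq.sub_one_mul_conj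
  -- the pairing
  have hconjq : ∀ θ t, (starRingEnd ℂ) ((1 - pt r (t - θ))⁻¹) = (1 - pt r (θ - t))⁻¹ := by
    intro θ t
    rw [map_inv₀, map_sub, conj_pt, map_one, neg_sub]
  have hInt : Integrable (fun x : ℝ × ℝ => g x.2 * (1 - pt r (x.1 - x.2))⁻¹ * (starRingEnd ℂ) (k x.1))
      (cm.prod cm) := by
    have h2 : Integrable (fun x : ℝ × ℝ => (starRingEnd ℂ) (k x.1) * g x.2) (cm.prod cm) :=
      Integrable.mul_prod (f := fun x => (starRingEnd ℂ) (k x))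
        ((LinearIsometryEquiv.integrable_comp_iff Complex.conjLIE).2 hki) hgi
    have h3 := h2.mul_bdd (c := (1 - r)⁻¹) (g := fun x : ℝ × ℝ => (1 - pt r (x.1 - x.2))⁻¹) ?_ ?_
    · refine h3.congr (Filter.Eventually.of_forall fun x => ?_)
      simp only; ring
    · apply Continuous.aestronglyMeasurable
      apply Continuous.inv₀
      · exact continuous_const.sub ((continuous_pt2 r).comp (continuous_fst.sub continuous_snd))
      · intro t; exact one_sub_ne (by rw [norm_pt, abs_of_nonneg h0]; exact h1)
    · exact Filter.Eventually.of_forall fun x => norm_q (by rw [norm_pt, abs_of_nonneg h0]) h1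
  have e3 : ((∫ θ, ‖T θ‖ ^ p ∂cm : ℝ) : ℂ) = ∫ t, g t * (starRingEnd ℂ) (Qop r k t) ∂cm := by
    have h00 : ((∫ θ, ‖T θ‖ ^ p ∂cm : ℝ) : ℂ) = ∫ θ, ((‖T θ‖ ^ p : ℝ) : ℂ) ∂cm :=
      integral_ofReal.symm
    rw [h00]
    calc ∫ θ, ((‖T θ‖ ^ p : ℝ) : ℂ) ∂cm
        = ∫ θ, (∫ t, g t * (1 - pt r (θ - t))⁻¹ * (starRingEnd ℂ) (k θ) ∂cm) ∂cm := by
          congr 1; ext θ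
          rw [← hTk, integral_mul_const]; rfl
      _ = ∫ t, (∫ θ, g t * (1 - pt r (θ - t))⁻¹ * (starRingEnd ℂ) (k θ) ∂cm) ∂cm :=
          integral_integral_swap hInt
      _ = _ := by
          congr 1; ext t
          unfold Qop
          rw [← integral_conj, ← integral_const_mul]
          congr 1; ext θ
          rw [map_mul _ (k θ), hconjq]; ring
  have e4 : S ≤ (∫⁻ t, ‖g t‖ₑ ^ p ∂cm) ^ (1 / p) * (∫⁻ t, ‖Qop r k t‖ₑ ^ q ∂cm) ^ (1 / q) := by
    have hh := ENNReal.lintegral_mul_le_Lp_mul_Lq cm hpq (f := fun t => ‖g t‖ₑ)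
      (g := fun t => ‖Qop r k t‖ₑ) hgm.enorm.aemeasurable
      (Qop_cont hki h0 h1).measurable.enorm.aemeasurable
    refine le_trans ?_ hh
    have : S = ‖((∫ θ, ‖T θ‖ ^ p ∂cm : ℝ) : ℂ)‖ₑ := by
      rw [e1, ← ofReal_norm, Complex.norm_real, Real.norm_of_nonneg]
      exact integral_nonneg fun θ => by positivity
    rw [this, e3]
    refine (enorm_integral_le_lintegral_enorm _).trans (le_of_eq ?_)
    congr 1; ext t
    rw [enorm_mul, Pi.mul_apply]
    congr 1
    rw [← ofReal_norm, ← ofReal_norm, RCLike.norm_conj]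
  have e5 : S ≤ (∫⁻ t, ‖g t‖ₑ ^ p ∂cm) ^ (1 / p) * (C * S) ^ (1 / q) := by
    refine e4.trans ?_
    gcongr
    rw [← e2]
    exact hC k hkm hki r h0 h1
  rcases eq_or_ne S 0 with hz | hz
  · rw [hz]; exact zero_le
  have e6 := ENNReal.rpow_le_rpow e5 hp0.le
  rw [ENNReal.mul_rpow_of_nonneg _ _ hp0.le, ← ENNReal.rpow_mul, ← ENNReal.rpow_mul,
    one_div_mul_cancel hp0.ne', ENNReal.rpow_one,
    ENNReal.mul_rpow_of_nonneg _ _ (by positivity)] at e6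
  have hx : 1 / q * p = p - 1 := by
    rw [one_div_mul_eq_div]; exact hpq.div_conj_eq_sub_one
  have hx2 : p / q = p - 1 := hpq.div_conj_eq_sub_one
  rw [hx2]
  rw [hx] at e6
  have e7 : S ^ p = S * S ^ (p - 1) := by
    conv_rhs => rw [← ENNReal.rpow_one S, ← ENNReal.rpow_mul, one_mul]
    rw [← ENNReal.rpow_add _ _ hz hSfin]; congr 1; ring
  rw [e7, ← mul_assoc] at e6
  have hS1 : S ^ (p - 1) ≠ 0 := by
    simp only [ne_eq, ENNReal.rpow_eq_zero_iff]; push Not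
    exact ⟨fun h => absurd h hz, fun h => absurd h hSfin⟩
  have hS2 : S ^ (p - 1) ≠ ⊤ := ENNReal.rpow_ne_top_of_nonneg (by linarith) hSfin
  rw [mul_comm ((C : ℝ≥0∞) ^ (p - 1))]
  exact (ENNReal.mul_le_mul_iff_left hS1 hS2).1 e6

/-- The M. Riesz theorem. -/
lemma Q_bdd {p : ℝ} (hp : 1 < p) : ∃ C : ℝ≥0, ∀ g : ℝ → ℂ, Measurable g →
    Integrable g cm → ∀ r : ℝ, 0 ≤ r → r < 1 →
    ∫⁻ θ, ‖Qop r g θ‖ₑ ^ p ∂cm ≤ C * ∫⁻ t, ‖g t‖ₑ ^ p ∂cm := by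
  rcases le_total p 2 with h | h
  · exact Q_le2 hp h
  · have hpq : p.HolderConjugate (p / (p - 1)) := Real.HolderConjugate.conjExponent hp
    obtain ⟨C, hC⟩ := Q_le2 (p := p / (p - 1)) hpq.symm.lt (by
      rw [div_le_iff₀ (by linarith)]; linarith)
    refine ⟨C ^ (p / (p / (p - 1))), ?_⟩
    intro g hgm hgi r h0 h1
    rw [ENNReal.coe_rpow_of_nonneg _ (div_nonneg hpq.pos.le hpq.symm.pos.le)]
    exact Q_dual hpq hC hgm hgi h0 h1

end

section

/-- difference sequence -/
def dif (a : ℕ → ℝ) : ℕ → ℝ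
  | 0 => a 0
  | (n+1) => a (n+1) - a n

lemma dif_sum {a : ℕ → ℝ} {S : ℝ} (ha0 : ∀ n, 0 ≤ a n) (haS : ∀ n, a n ≤ S)
    (hu : ∀ n, a (n+1) ≤ a n → a (n+2) ≤ a (n+1)) (N : ℕ) :
    ∑ n ∈ Finset.range N, |dif a n| ≤ 2 * S := by
  have key : ∀ N, (∑ n ∈ Finset.range (N+1), |dif a n| ≤ 2 * S - a N ∧ a (N+1) ≤ a N) ∨
      ∑ n ∈ Finset.range (N+1), |dif a n| = a N := by
    intro N
    induction N with
    | zero => right; simp [dif, abs_of_nonneg (ha0 0)]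
    | succ N ih =>
      rw [Finset.sum_range_succ]
      have hd : dif a (N+1) = a (N+1) - a N := rfl
      rw [hd]
      rcases ih with ⟨h1, h2⟩ | h
      · left
        refine ⟨?_, hu N h2⟩
        rw [abs_of_nonpos (by linarith)]; linarith
      · rcases le_total (a (N+1)) (a N) with h2 | h2
        · left
          refine ⟨?_, hu N h2⟩
          rw [abs_of_nonpos (by linarith), h]; linarith [haS N]
        · right
          rw [abs_of_nonneg (by linarith), h]; ring
  cases N with
  | zero => simp; linarith [ha0 0, haS 0]
  | succ N =>
    rcases key N with ⟨h1, h2⟩ | h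
    · linarith [ha0 N]
    · linarith [ha0 N, haS N]

lemma geo_summable {a : ℕ → ℝ} {S : ℝ} (ha : ∀ n, |a n| ≤ S) {x : ℂ} (hx : ‖x‖ < 1) :
    Summable fun n => (a n : ℂ) * x ^ n := by
  apply Summable.of_norm_bounded (g := fun n => S * ‖x‖ ^ n)
    ((summable_geometric_of_lt_one (norm_nonneg _) hx).mul_left S)
  intro n
  rw [norm_mul, norm_pow, Complex.norm_real, Real.norm_eq_abs]
  gcongr
  exact ha n

lemma abel_id {a : ℕ → ℝ} {S : ℝ} (ha0 : ∀ n, 0 ≤ a n) (haS : ∀ n, a n ≤ S)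
    {x : ℂ} (hx : ‖x‖ < 1) :
    ∑' n, (a n : ℂ) * x ^ n = (∑' n, (dif a n : ℂ) * x ^ n) * (1 - x)⁻¹ := by
  have hs : Summable fun n => (a n : ℂ) * x ^ n :=
    geo_summable (S := S) (fun n => by rw [abs_of_nonneg (ha0 n)]; exact haS n) hx
  have hs' : Summable fun n => (dif a n : ℂ) * x ^ n := by
    apply geo_summable (S := S) _ hx
    intro n
    cases n with
    | zero => simp only [dif]; rw [abs_of_nonneg (ha0 0)]; exact haS 0
    | succ n =>
      simp only [dif]; rw [abs_le]
      constructor <;> linarith [ha0 n, ha0 (n+1), haS n, haS (n+1)]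
  have hne := one_sub_ne hx
  rw [eq_mul_inv_iff_mul_eq₀ hne, hs'.tsum_eq_zero_add, mul_sub, mul_one]
  have h1 : ∀ n, (dif a (n+1) : ℂ) * x ^ (n+1) = (a (n+1) : ℂ) * x ^ (n+1) - (a n : ℂ) * x ^ n * x := by
    intro n; simp only [dif]; push_cast; ring
  simp only [h1]
  have hs2 : Summable fun n => (a (n+1) : ℂ) * x ^ (n+1) := (summable_nat_add_iff 1).2 hs
  rw [hs2.tsum_sub (hs.mul_right x), tsum_mul_right]
  nth_rw 1 [hs.tsum_eq_zero_add]
  simp [dif]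
  ring

lemma mult_expand {a : ℕ → ℝ} {S : ℝ} (ha0 : ∀ n, 0 ≤ a n) (haS : ∀ n, a n ≤ S)
    {g : ℝ → ℂ} (hgi : Integrable g cm) {r : ℝ} (h0 : 0 ≤ r) (h1 : r < 1) (θ : ℝ) :
    ‖∫ t, g t * (∑' n, (a n : ℂ) * pt r (θ - t) ^ n) ∂cm‖ₑ ≤
      ∑' n : ℕ, ‖Qop r (fun t => g t * pt 1 (-(n * t))) θ‖ₑ * ‖dif a n‖ₑ := by
  have hx : ∀ t, ‖pt r (θ - t)‖ < 1 := fun t => by rwa [norm_pt, abs_of_nonneg h0]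
  have hdS : ∀ n, |dif a n| ≤ S := by
    intro n
    cases n with
    | zero => simp only [dif]; rw [abs_of_nonneg (ha0 0)]; exact haS 0
    | succ n =>
      simp only [dif]; rw [abs_le]
      constructor <;> linarith [ha0 n, ha0 (n+1), haS n, haS (n+1)]
  set F : ℕ → ℝ → ℂ := fun n t => g t * (1 - pt r (θ - t))⁻¹ * ((dif a n : ℂ) * pt r (θ - t) ^ n)
    with hF
  have hQi := Q_int hgi h0 h1 θ
  have hFi : ∀ n, Integrable (F n) cm := by
    intro n
    apply hQi.mul_bdd (c := S)
    · apply Continuous.aestronglyMeasurable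
      exact continuous_const.mul (((continuous_pt2 r).comp (continuous_const.sub continuous_id)).pow n)
    · refine Filter.Eventually.of_forall fun t => ?_
      rw [norm_mul, norm_pow, Complex.norm_real, Real.norm_eq_abs]
      calc _ ≤ S * 1 := by
            gcongr
            · exact (ha0 0).trans (haS 0)
            · exact hdS n
            · exact pow_le_one₀ (norm_nonneg _) (hx t).le
        _ = S := mul_one S
  have hFn : ∀ n, ∫ t, ‖F n t‖ ∂cm ≤ (∫ t, ‖g t * (1 - pt r (θ - t))⁻¹‖ ∂cm) * (S * r ^ n) := by
    intro n
    rw [← integral_mul_const]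
    apply integral_mono (hFi n).norm (hQi.norm.mul_const _)
    intro t
    simp only [hF]
    rw [norm_mul _ ((dif a n : ℂ) * pt r (θ - t) ^ n), norm_mul (dif a n : ℂ), norm_pow,
      Complex.norm_real, Real.norm_eq_abs, norm_pt, abs_of_nonneg h0]
    gcongr
    exact hdS n
  have hFs : Summable fun n => ∫ t, ‖F n t‖ ∂cm := by
    refine Summable.of_nonneg_of_le (fun n => integral_nonneg fun t => norm_nonneg _) hFn ?_
    exact ((summable_geometric_of_lt_one h0 h1).mul_left S).mul_left _
  have e1 : ∫ t, g t * (∑' n, (a n : ℂ) * pt r (θ - t) ^ n) ∂cm = ∑' n, ∫ t, F n t ∂cm := by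
    rw [integral_tsum_of_summable_integral_norm hFi hFs]
    congr 1; ext t
    rw [abel_id ha0 haS (hx t), hF]
    simp only
    rw [tsum_mul_left]; ring
  have e2 : ∀ n : ℕ, ∫ t, F n t ∂cm =
      (dif a n : ℂ) * pt (r ^ n) (n * θ) * Qop r (fun t => g t * pt 1 (-(n * t))) θ := by
    intro n
    unfold Qop
    rw [← integral_const_mul]
    congr 1; ext t
    simp only [hF]
    have : pt r (θ - t) ^ n = pt (r ^ n) (n * θ) * pt 1 (-(n * t)) := by
      rw [pt_pow, pt_mul, mul_one]; congr 1; ring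
    rw [this]; ring
  rw [e1]
  have hs : Summable fun n => ‖∫ t, F n t ∂cm‖ :=
    Summable.of_nonneg_of_le (fun n => norm_nonneg _) (fun n => norm_integral_le_integral_norm _) hFs
  refine (enorm_tsum_le_tsum_enorm).trans ?_
  apply ENNReal.tsum_le_tsum
  intro n
  rw [e2, enorm_mul, enorm_mul, mul_comm]
  gcongr
  rw [← ofReal_norm, ← ofReal_norm, ← ofReal_norm, norm_pt, Complex.norm_real, ← ENNReal.ofReal_mul (norm_nonneg _)]
  apply ENNReal.ofReal_le_ofReal
  have : |r ^ n| ≤ 1 := by rw [abs_of_nonneg (by positivity)]; exact pow_le_one₀ h0 h1.le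
  exact mul_le_of_le_one_right (norm_nonneg _) this

lemma mult_bdd {p : ℝ} (hp : 1 < p) : ∃ C : ℝ≥0, ∀ (a : ℕ → ℝ) (S : ℝ), (∀ n, 0 ≤ a n) →
    (∀ n, a n ≤ S) → (∀ n, a (n+1) ≤ a n → a (n+2) ≤ a (n+1)) →
    ∀ g : ℝ → ℂ, Measurable g → Integrable g cm → ∀ r : ℝ, 0 ≤ r → r < 1 →
    ∫⁻ θ, ‖∫ t, g t * (∑' n, (a n : ℂ) * pt r (θ - t) ^ n) ∂cm‖ₑ ^ p ∂cm ≤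
      C * ENNReal.ofReal S ^ p * ∫⁻ t, ‖g t‖ₑ ^ p ∂cm := by
  obtain ⟨C, hC⟩ := Q_bdd hp
  have hp0 : 0 < p := by linarith
  refine ⟨2 ^ p * C, ?_⟩
  intro a S ha0 haS hu g hgm hgi r h0 h1
  have hS0 : 0 ≤ S := (ha0 0).trans (haS 0)
  have hsum : ∑' n, ‖dif a n‖ₑ ≤ ENNReal.ofReal (2 * S) := by
    apply ENNReal.tsum_le_of_sum_range_le
    intro N
    have : ∀ n, ‖dif a n‖ₑ = ENNReal.ofReal |dif a n| := fun n => by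
      rw [← ofReal_norm, Real.norm_eq_abs]
    simp only [this]
    rw [← ENNReal.ofReal_sum_of_nonneg (fun _ _ => abs_nonneg _)]
    exact ENNReal.ofReal_le_ofReal (dif_sum ha0 haS hu N)
  have hgn : ∀ n : ℕ, Measurable (fun t => g t * pt 1 (-(n * t))) ∧
      Integrable (fun t => g t * pt 1 (-(n * t))) cm := by
    intro n
    have hcont : Continuous fun t : ℝ => pt 1 (-(n * t)) := (continuous_pt2 1).comp (by fun_prop)
    refine ⟨hgm.mul hcont.measurable, ?_⟩
    apply hgi.mul_bdd (c := 1) hcont.aestronglyMeasurable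
    exact Filter.Eventually.of_forall fun t => by simp [norm_pt]
  have hnorm : ∀ (n : ℕ) t, ‖g t * pt 1 (-(n * t))‖ₑ = ‖g t‖ₑ := by
    intro n t
    rw [enorm_mul]
    have : ‖pt 1 (-(n * t))‖ₑ = 1 := by rw [← ofReal_norm, norm_pt]; simp
    rw [this, mul_one]
  have hpt : ∀ θ, ‖∫ t, g t * (∑' n, (a n : ℂ) * pt r (θ - t) ^ n) ∂cm‖ₑ ^ p ≤
      (∑' n : ℕ, ‖Qop r (fun t => g t * pt 1 (-(n * t))) θ‖ₑ ^ p * ‖dif a n‖ₑ) *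
        ENNReal.ofReal (2 * S) ^ (p - 1) := by
    intro θ
    refine (ENNReal.rpow_le_rpow (mult_expand ha0 haS hgi h0 h1 θ) hp0.le).trans ?_
    have hw := wJ (Measure.count : Measure ℕ) hp
      (f := fun n => ‖Qop r (fun t => g t * pt 1 (-(n * t))) θ‖ₑ) (c := fun n => ‖dif a n‖ₑ)
      (Measurable.aemeasurable (measurable_of_countable _))
      (Measurable.aemeasurable (measurable_of_countable _))
    simp only [lintegral_count] at hw
    refine hw.trans ?_
    gcongr
  have hQm : ∀ n : ℕ, Measurable fun θ =>
      ‖Qop r (fun t => g t * pt 1 (-(n * t))) θ‖ₑ ^ p * ‖dif a n‖ₑ := by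
    intro n
    exact ((Qop_cont (hgn n).2 h0 h1).measurable.enorm.pow_const p).mul_const _
  have hfin : ENNReal.ofReal (2 * S) ^ (p - 1) ≠ ⊤ :=
    ENNReal.rpow_ne_top_of_nonneg (by linarith) ENNReal.ofReal_ne_top
  calc _ ≤ ∫⁻ θ, (∑' n : ℕ, ‖Qop r (fun t => g t * pt 1 (-(n * t))) θ‖ₑ ^ p * ‖dif a n‖ₑ) *
        ENNReal.ofReal (2 * S) ^ (p - 1) ∂cm := lintegral_mono hpt
    _ = (∑' n : ℕ, (∫⁻ θ, ‖Qop r (fun t => g t * pt 1 (-(n * t))) θ‖ₑ ^ p ∂cm) * ‖dif a n‖ₑ) *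
        ENNReal.ofReal (2 * S) ^ (p - 1) := by
        rw [lintegral_mul_const' _ _ hfin, lintegral_tsum (fun n => (hQm n).aemeasurable)]
        congr 2; ext n
        rw [lintegral_mul_const' _ _ enorm_ne_top]
    _ ≤ (∑' n : ℕ, (C * ∫⁻ t, ‖g t‖ₑ ^ p ∂cm) * ‖dif a n‖ₑ) *
        ENNReal.ofReal (2 * S) ^ (p - 1) := by
        gcongr with n
        have := hC _ (hgn n).1 (hgn n).2 r h0 h1
        simp only [hnorm] at this
        exact this
    _ ≤ ((C * ∫⁻ t, ‖g t‖ₑ ^ p ∂cm) * ENNReal.ofReal (2 * S)) *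
        ENNReal.ofReal (2 * S) ^ (p - 1) := by
        rw [ENNReal.tsum_mul_left]
        gcongr
    _ = (C * ∫⁻ t, ‖g t‖ₑ ^ p ∂cm) * ENNReal.ofReal (2 * S) ^ p := by
        rw [mul_assoc]
        congr 1
        conv_lhs => rw [← ENNReal.rpow_one (ENNReal.ofReal (2 * S)), ← ENNReal.rpow_mul, one_mul]
        rw [← ENNReal.rpow_add_of_nonneg _ _ (by norm_num) (by linarith)]
        congr 1; ring
    _ = _ := by
        rw [ENNReal.ofReal_mul (by norm_num), ENNReal.mul_rpow_of_nonneg _ _ hp0.le]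
        push_cast
        rw [ENNReal.coe_rpow_of_nonneg _ hp0.le]
        simp only [ENNReal.ofReal_ofNat]
        push_cast
        ring

end

section

/-- A normalized weight: measurable, nonnegative, supported in `(0,1)`, integrable, and in `D̂`. -/
structure NW (w : ℝ → ℝ) : Prop where
  meas : Measurable w
  nn : ∀ s, 0 ≤ w s
  supp : ∀ s, s ∉ Ioo (0:ℝ) 1 → w s = 0
  int : Integrable w
  pos : ∀ r ∈ Ico (0:ℝ) 1, 0 < hatw w r
  dh : Dhat w

/-- The measure `s w(s) ds`. -/
def mW (w : ℝ → ℝ) : Measure ℝ := volume.withDensity fun s => ENNReal.ofReal (s * w s)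

namespace NW
variable {w : ℝ → ℝ}

lemma sw_nn (h : NW w) (s : ℝ) : 0 ≤ s * w s := by
  by_cases hs : s ∈ Ioo (0:ℝ) 1
  · exact mul_nonneg hs.1.le (h.nn s)
  · simp [h.supp s hs]

lemma sw_le (h : NW w) (s : ℝ) : s * w s ≤ w s := by
  by_cases hs : s ∈ Ioo (0:ℝ) 1
  · exact mul_le_of_le_one_left (h.nn s) hs.2.le
  · simp [h.supp s hs]

lemma sw_int (h : NW w) : Integrable fun s => s * w s := by
  refine h.int.mono' (measurable_id.mul h.meas).aestronglyMeasurable (Filter.Eventually.of_forall fun s => ?_)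
  rw [Real.norm_of_nonneg (h.sw_nn s)]; exact h.sw_le s

lemma sw_meas (h : NW w) : Measurable fun s => ENNReal.ofReal (s * w s) :=
  (measurable_id.mul h.meas).ennreal_ofReal

lemma hatw_eq (h : NW w) (r : ℝ) : hatw w r = ∫ s in Ioi r, w s := by
  unfold hatw
  refine setIntegral_eq_of_subset_of_forall_sdiff_eq_zero measurableSet_Ioi (fun x hx => hx.1) ?_ |>.symm
  intro x hx
  exact h.supp x fun hx2 => hx.2 ⟨hx.1, hx2.2⟩

lemma hat1_eq (h : NW w) (r : ℝ) : hat1 w r = ∫ s in Ioi r, s * w s := by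
  unfold hat1
  refine setIntegral_eq_of_subset_of_forall_sdiff_eq_zero measurableSet_Ioi (fun x hx => hx.1) ?_ |>.symm
  intro x hx
  rw [h.supp x fun hx2 => hx.2 ⟨hx.1, hx2.2⟩, mul_zero]

lemma mW_Ioi (h : NW w) (r : ℝ) : mW w (Ioi r) = ENNReal.ofReal (hat1 w r) := by
  rw [h.hat1_eq, mW, withDensity_apply _ measurableSet_Ioi,
    ofReal_integral_eq_lintegral_ofReal h.sw_int.integrableOn
      (Filter.Eventually.of_forall h.sw_nn)]

lemma hat1_nn (h : NW w) (r : ℝ) : 0 ≤ hat1 w r := by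
  rw [h.hat1_eq]; exact setIntegral_nonneg measurableSet_Ioi fun s _ => h.sw_nn s

lemma hat1_anti (h : NW w) : Antitone (hat1 w) := by
  intro a b hab
  have : mW w (Ioi b) ≤ mW w (Ioi a) := measure_mono (Ioi_subset_Ioi hab)
  rw [h.mW_Ioi, h.mW_Ioi] at this
  exact (ENNReal.ofReal_le_ofReal_iff (h.hat1_nn a)).1 this

lemma hat1_cont (h : NW w) : Continuous (hat1 w) := by
  have : hat1 w = fun r => (∫ s, s * w s) - ∫ s in Iic r, s * w s := by
    ext r
    rw [h.hat1_eq]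
    have := integral_add_compl (s := Iic r) measurableSet_Iic h.sw_int
    rw [compl_Iic] at this
    linarith
  rw [this]
  have h2 : Continuous fun r => ∫ s in Iic r, s * w s := by
    have e : (fun r => ∫ s in Iic r, s * w s) =
        fun r => (∫ s in Iic 0, s * w s) + ∫ s in (0:ℝ)..r, s * w s := by
      ext r
      have := intervalIntegral.integral_Iic_sub_Iic (μ := volume) (f := fun s => s * w s) (a := 0) (b := r)
        h.sw_int.integrableOn h.sw_int.integrableOn
      linarith
    rw [e]
    exact continuous_const.add (intervalIntegral.continuous_primitive (fun a b => h.sw_int.intervalIntegrable) 0)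
  exact continuous_const.sub h2

lemma hat1_one (h : NW w) {r : ℝ} (hr : 1 ≤ r) : hat1 w r = 0 := by
  unfold hat1; rw [Ioo_eq_empty (by linarith)]; simp

lemma hat1_le_zero (h : NW w) (r : ℝ) : hat1 w r ≤ hat1 w 0 := by
  rw [h.hat1_eq, h.hat1_eq]
  rw [setIntegral_eq_integral_of_forall_compl_eq_zero (s := Ioi (0:ℝ))]
  · exact setIntegral_le_integral h.sw_int (Filter.Eventually.of_forall h.sw_nn)
  · intro x hx
    rw [h.supp x fun hx2 => hx hx2.1, mul_zero]

lemma hat1_le_hatw (h : NW w) (r : ℝ) : hat1 w r ≤ hatw w r := by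
  rw [h.hat1_eq, h.hatw_eq]
  exact setIntegral_mono h.sw_int.integrableOn h.int.integrableOn h.sw_le

lemma hatw_le_hat1 (h : NW w) {r : ℝ} (hr : 1/2 ≤ r) : hatw w r ≤ 2 * hat1 w r := by
  rw [h.hat1_eq, h.hatw_eq, ← integral_const_mul]
  refine setIntegral_mono_on h.int.integrableOn (h.sw_int.const_mul 2).integrableOn measurableSet_Ioi ?_
  intro x hx
  have : (1:ℝ)/2 ≤ x := hr.trans (le_of_lt hx)
  nlinarith [h.nn x]

lemma hat1_pos (h : NW w) {r : ℝ} (hr : r < 1) : 0 < hat1 w r := by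
  have h1 : (max r (1/2)) ∈ Ico (0:ℝ) 1 := ⟨le_max_of_le_right (by norm_num), max_lt hr (by norm_num)⟩
  have := h.pos _ h1
  have h2 := h.hatw_le_hat1 (le_max_right r (1/2))
  have h3 := h.hat1_anti (le_max_left r (1/2))
  linarith

/-- Doubling of `ω̂₁` along square roots. -/
lemma dbl (h : NW w) : ∃ C : ℝ, 0 < C ∧ ∀ ρ ∈ Ico (0:ℝ) 1, hat1 w ρ ≤ C * hat1 w (Real.sqrt ρ) := by
  obtain ⟨C, hC⟩ := h.dh
  refine ⟨2 * (|C| + 1), by positivity, fun ρ hρ => ?_⟩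
  have h1 := hC ρ hρ
  have h2 := h.hatw_le_hat1 (r := (1+ρ)/2) (by linarith [hρ.1])
  have h3 : Real.sqrt ρ ≤ (1+ρ)/2 := by
    have := Real.sq_sqrt hρ.1
    nlinarith [sq_nonneg (Real.sqrt ρ - 1)]
  have h4 := h.hat1_anti h3
  have h5 := h.hat1_le_hatw ρ
  have h6 : 0 ≤ hat1 w ((1+ρ)/2) := h.hat1_nn _
  have h7 : 0 ≤ hatw w ((1+ρ)/2) := h6.trans (h.hat1_le_hatw _)
  calc _ ≤ C * hatw w ((1+ρ)/2) := h5.trans h1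
    _ ≤ (|C|+1) * hatw w ((1+ρ)/2) := by gcongr; linarith [le_abs_self C]
    _ ≤ (|C|+1) * (2 * hat1 w (Real.sqrt ρ)) := by gcongr; linarith
    _ = _ := by ring

lemma mW_univ (h : NW w) : mW w univ = ENNReal.ofReal (hat1 w 0) := by
  rw [← h.mW_Ioi]
  rw [mW, withDensity_apply _ measurableSet_Ioi, withDensity_apply _ MeasurableSet.univ, Measure.restrict_univ]
  rw [setLIntegral_eq_of_support_subset]
  · intro x hx
    by_contra hx2
    apply hx
    simp only [h.supp x fun hx3 => hx2 hx3.1, mul_zero, ENNReal.ofReal_zero]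

lemma finm (h : NW w) : IsFiniteMeasure (mW w) := ⟨by rw [h.mW_univ]; exact ENNReal.ofReal_lt_top⟩

lemma push (h : NW w) : (mW w).map (hat1 w) = volume.restrict (Ioc 0 (hat1 w 0)) := by
  have := h.finm
  have hm : Measurable (hat1 w) := h.hat1_cont.measurable
  have : IsFiniteMeasure ((mW w).map (hat1 w)) := inferInstance
  refine Measure.ext_of_Iic _ _ fun a => ?_
  rw [Measure.map_apply hm measurableSet_Iic, Measure.restrict_apply measurableSet_Iic]
  have hc0 : 0 < hat1 w 0 := h.hat1_pos one_pos
  have e : Iic a ∩ Ioc 0 (hat1 w 0) = Ioc 0 (min (hat1 w 0) a) := by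
    ext x; simp only [mem_inter_iff, mem_Iic, mem_Ioc, le_min_iff]; tauto
  rw [e, Real.volume_Ioc, sub_zero]
  rcases lt_or_ge a 0 with ha | ha
  · have : hat1 w ⁻¹' Iic a = ∅ := by
      ext x; simp only [mem_preimage, mem_Iic, mem_empty_iff_false, iff_false, not_le]
      exact ha.trans_le (h.hat1_nn x)
    rw [this, measure_empty, ENNReal.ofReal_of_nonpos ((min_le_right _ _).trans ha.le)]
  rcases le_or_gt (hat1 w 0) a with hca | hca
  · have : hat1 w ⁻¹' Iic a = univ := by
      ext x; simp only [mem_preimage, mem_Iic, mem_univ, iff_true]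
      exact (h.hat1_le_zero x).trans hca
    rw [this, min_eq_left hca, h.mW_univ]
  rw [min_eq_right hca.le]
  have ivt : ∀ b, 0 ≤ b → b < hat1 w 0 → ∃ x, hat1 w x = b := by
    intro b hb hb2
    have := intermediate_value_Icc' (zero_le_one (α := ℝ)) h.hat1_cont.continuousOn
    rw [h.hat1_one le_rfl] at this
    obtain ⟨x, -, hx⟩ := this ⟨hb, hb2.le⟩
    exact ⟨x, hx⟩
  apply le_antisymm
  · have key : ∀ b, a < b → b < hat1 w 0 → mW w (hat1 w ⁻¹' Iic a) ≤ ENNReal.ofReal b := by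
      intro b hab hb
      obtain ⟨x, hx⟩ := ivt b (ha.trans hab.le) hb
      rw [← hx, ← h.mW_Ioi]
      refine measure_mono fun y hy => ?_
      by_contra hyx
      have := h.hat1_anti (not_lt.1 hyx)
      have hy' : hat1 w y ≤ a := hy
      linarith
    have ht : Filter.Tendsto (fun b => ENNReal.ofReal b) (nhdsWithin a (Ioi a)) (nhds (ENNReal.ofReal a)) :=
      (ENNReal.continuous_ofReal.tendsto a).mono_left nhdsWithin_le_nhds
    refine ge_of_tendsto ht ?_
    filter_upwards [Ioo_mem_nhdsGT hca] with b hb using key b hb.1 hb.2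
  · obtain ⟨x, hx⟩ := ivt a ha hca
    rw [← hx, ← h.mW_Ioi]
    refine measure_mono fun y hy => h.hat1_anti (le_of_lt hy)

lemma lint_H (h : NW w) {φ : ℝ → ℝ≥0∞} (hφ : Measurable φ) :
    ∫⁻ s, φ (hat1 w s) ∂(mW w) = ∫⁻ u in Ioc 0 (hat1 w 0), φ u := by
  rw [← h.push, lintegral_map hφ h.hat1_cont.measurable]

lemma lint_H_le (h : NW w) {φ : ℝ → ℝ≥0∞} (hφ : Measurable φ) (r : ℝ) :
    ∫⁻ s in Ioi r, φ (hat1 w s) ∂(mW w) ≤ ∫⁻ u in Ioc 0 (hat1 w r), φ u := by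
  calc _ ≤ ∫⁻ s, (Iic (hat1 w r)).indicator φ (hat1 w s) ∂(mW w) := by
        rw [← lintegral_indicator measurableSet_Ioi]
        refine lintegral_mono fun s => ?_
        by_cases hs : s ∈ Ioi r
        · rw [indicator_of_mem hs, indicator_of_mem]
          exact h.hat1_anti (le_of_lt hs)
        · rw [indicator_of_notMem hs]; exact zero_le
    _ = ∫⁻ u in Ioc 0 (hat1 w 0), (Iic (hat1 w r)).indicator φ u := h.lint_H (hφ.indicator measurableSet_Iic)
    _ = ∫⁻ u in Ioc 0 (hat1 w 0) ∩ Iic (hat1 w r), φ u := by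
        rw [lintegral_indicator measurableSet_Iic, Measure.restrict_restrict measurableSet_Iic, inter_comm]
    _ ≤ _ := by
        apply lintegral_mono_set
        intro u hu
        exact ⟨hu.1.1, hu.2⟩

end NW

lemma lint_pow {β x : ℝ} (hβ : -1 < β) (hx : 0 ≤ x) :
    ∫⁻ u in Ioc 0 x, ENNReal.ofReal (u ^ β) = ENNReal.ofReal (x ^ (β+1) / (β+1)) := by
  have hi : IntervalIntegrable (fun u : ℝ => u ^ β) volume 0 x := intervalIntegral.intervalIntegrable_rpow' hβ
  have h1 := integral_rpow (a := 0) (b := x) (Or.inl hβ)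
  rw [Real.zero_rpow (by linarith), sub_zero, intervalIntegral.integral_of_le hx] at h1
  rw [← h1, ofReal_integral_eq_lintegral_ofReal]
  · exact (intervalIntegrable_iff_integrableOn_Ioc_of_le hx).1 hi
  · exact (ae_restrict_iff' measurableSet_Ioc).2 (Filter.Eventually.of_forall fun u hu => Real.rpow_nonneg hu.1.le _)

lemma lint_pow_tail {β x : ℝ} (hβ : 0 < β) (hx : 0 < x) :
    ∫⁻ u in Ioi x, ENNReal.ofReal (u ^ (-1-β)) = ENNReal.ofReal (x ^ (-β) / β) := by
  have h1 := integral_Ioi_rpow_of_lt (a := -1-β) (by linarith) hx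
  have e : -1 - β + 1 = -β := by ring
  rw [e, neg_div_neg_eq] at h1
  rw [← h1, ofReal_integral_eq_lintegral_ofReal]
  · exact integrableOn_Ioi_rpow_of_lt (by linarith) hx
  · exact (ae_restrict_iff' measurableSet_Ioi).2 (Filter.Eventually.of_forall fun u hu => Real.rpow_nonneg (hx.le.trans (le_of_lt hu)) _)

lemma lint_max {β x c : ℝ} (h0 : 0 < β) (h1 : β < 1) (hx : 0 < x) :
    ∫⁻ u in Ioc 0 c, ENNReal.ofReal ((max x u)⁻¹ * u ^ (-β)) ≤
      ENNReal.ofReal ((1/(1-β) + 1/β) * x ^ (-β)) := by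
  have hsub : Ioc 0 c ⊆ Ioc 0 x ∪ Ioi x := fun u hu => by
    rcases le_or_gt u x with h | h
    · exact Or.inl ⟨hu.1, h⟩
    · exact Or.inr h
  have h1' : 0 < 1 - β := by linarith
  calc _ ≤ ∫⁻ u in Ioc 0 x ∪ Ioi x, ENNReal.ofReal ((max x u)⁻¹ * u ^ (-β)) := lintegral_mono_set hsub
    _ ≤ _ := lintegral_union_le _ _ _
    _ = (∫⁻ u in Ioc 0 x, ENNReal.ofReal x⁻¹ * ENNReal.ofReal (u ^ (-β))) +
        ∫⁻ u in Ioi x, ENNReal.ofReal (u ^ (-1-β)) := by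
        congr 1
        · refine setLIntegral_congr_fun measurableSet_Ioc fun u hu => ?_
          show ENNReal.ofReal ((max x u)⁻¹ * u ^ (-β)) = _
          rw [max_eq_left hu.2, ENNReal.ofReal_mul (by positivity)]
        · refine setLIntegral_congr_fun measurableSet_Ioi fun u hu => ?_
          have hu' : x < u := hu
          have : 0 < u := hx.trans hu'
          show ENNReal.ofReal ((max x u)⁻¹ * u ^ (-β)) = _
          rw [max_eq_right hu'.le, sub_eq_add_neg, Real.rpow_add this, Real.rpow_neg_one]
    _ = ENNReal.ofReal x⁻¹ * ENNReal.ofReal (x ^ (-β+1) / (-β+1)) + ENNReal.ofReal (x ^ (-β) / β) := by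
        rw [lintegral_const_mul' _ _ ENNReal.ofReal_ne_top, lint_pow (by linarith) hx.le, lint_pow_tail h0 hx]
    _ = _ := by
        rw [← ENNReal.ofReal_mul (by positivity), ← ENNReal.ofReal_add]
        · congr 1
          rw [Real.rpow_add hx, Real.rpow_one, show -β + 1 = 1 - β by ring]
          field_simp
        · rw [show -β + 1 = 1 - β by ring]; positivity
        · positivity

end

section

lemma lint_pow_top {β c : ℝ} (hβ : β ≤ -1) (hc : 0 < c) :
    ∫⁻ u in Ioc 0 c, ENNReal.ofReal (u ^ β) = ⊤ := by
  by_contra hne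
  have : IntegrableOn (fun u : ℝ => u ^ β) (Ioo 0 c) := by
    refine ⟨(measurable_id.pow_const β).aestronglyMeasurable, ?_⟩
    rw [hasFiniteIntegral_iff_ofReal]
    · exact (lintegral_mono_set Ioo_subset_Ioc_self).trans_lt (lt_top_iff_ne_top.2 hne)
    · exact (ae_restrict_iff' measurableSet_Ioo).2 (Filter.Eventually.of_forall fun u hu => Real.rpow_nonneg hu.1.le _)
  rw [intervalIntegral.integrableOn_Ioo_rpow_iff hc] at this
  linarith

lemma sig_real {p α w H : ℝ} (hp : 1 < p) (hw : 0 < w) (hH : 0 < H) :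
    (w / (w * H ^ α) ^ (1/p)) ^ (p/(p-1)) = w * H ^ (-α/(p-1)) := by
  have h1 : p - 1 ≠ 0 := by linarith
  have h2 : p ≠ 0 := by linarith
  have hHa : 0 < H ^ α := Real.rpow_pos_of_pos hH _
  rw [Real.mul_rpow hw.le hHa.le, ← Real.rpow_mul hH.le, ← div_div]
  have e1 : w / w ^ (1/p) = w ^ (1 - 1/p) := by
    rw [Real.rpow_sub hw, Real.rpow_one]
  rw [e1, Real.div_rpow (by positivity) (by positivity), ← Real.rpow_mul hw.le, ← Real.rpow_mul hH.le]
  have e2 : (1 - 1/p) * (p/(p-1)) = 1 := by field_simp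
  have e3 : α * (1/p) * (p/(p-1)) = α/(p-1) := by field_simp
  rw [e2, e3, Real.rpow_one, neg_div, Real.rpow_neg hH.le]; rfl

namespace NW
variable {w : ℝ → ℝ}

lemma lint_mW (h : NW w) {g : ℝ → ℝ≥0∞} (hg : Measurable g) {S : Set ℝ} (hS : MeasurableSet S) :
    ∫⁻ s in S, g s ∂(mW w) = ∫⁻ s in S, ENNReal.ofReal (s * w s) * g s := by
  rw [mW, setLIntegral_withDensity_eq_setLIntegral_mul _ h.sw_meas hg hS]; rfl

lemma sigmaE_eq (h : NW w) {p α s : ℝ} (hp : 1 < p) (hs : s ∈ Ioo (0:ℝ) 1) :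
    ENNReal.ofReal s * sigmaE p w (fun s => w s * hat1 w s ^ α) s =
      ENNReal.ofReal (s * w s) * ENNReal.ofReal (hat1 w s ^ (-α/(p-1))) := by
  have hH := h.hat1_pos hs.2
  unfold sigmaE
  have hq : 0 < p/(p-1) := div_pos (by linarith) (by linarith)
  rcases (h.nn s).eq_or_lt with hw | hw
  · simp [← hw, hq]
  have hHa : 0 < hat1 w s ^ α := Real.rpow_pos_of_pos hH _
  rw [ENNReal.ofReal_rpow_of_pos (by positivity), ← ENNReal.ofReal_div_of_pos (by positivity),
    ENNReal.ofReal_rpow_of_pos (by positivity), sig_real hp hw hH, ENNReal.ofReal_mul hw.le,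
    ENNReal.ofReal_mul hs.1.le, mul_assoc]

lemma Hpow_meas (h : NW w) (β : ℝ) : Measurable fun s => ENNReal.ofReal (hat1 w s ^ β) :=
  (h.hat1_cont.measurable.pow_const β).ennreal_ofReal

lemma nu_eq (h : NW w) (α : ℝ) {r : ℝ} (hr : 0 ≤ r) :
    ∫⁻ s in Ioo r 1, ENNReal.ofReal (s * (w s * hat1 w s ^ α)) =
      ∫⁻ s in Ioo r 1, ENNReal.ofReal (hat1 w s ^ α) ∂(mW w) := by
  rw [h.lint_mW (h.Hpow_meas α) measurableSet_Ioo]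
  refine setLIntegral_congr_fun measurableSet_Ioo fun s hs => ?_
  show ENNReal.ofReal (s * (w s * hat1 w s ^ α)) = _
  rw [← mul_assoc, ENNReal.ofReal_mul (h.sw_nn s)]

lemma sig_eq (h : NW w) {p : ℝ} (α : ℝ) (hp : 1 < p) {r : ℝ} (hr : 0 ≤ r) :
    ∫⁻ s in Ioo r 1, ENNReal.ofReal s * sigmaE p w (fun s => w s * hat1 w s ^ α) s =
      ∫⁻ s in Ioo r 1, ENNReal.ofReal (hat1 w s ^ (-α/(p-1))) ∂(mW w) := by
  rw [h.lint_mW (h.Hpow_meas _) measurableSet_Ioo]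
  refine setLIntegral_congr_fun measurableSet_Ioo fun s hs => ?_
  exact h.sigmaE_eq hp ⟨hr.trans_lt hs.1, hs.2⟩

lemma mW_Ioo (h : NW w) (g : ℝ → ℝ≥0∞) : ∫⁻ s in Ioo 0 1, g s ∂(mW w) = ∫⁻ s, g s ∂(mW w) := by
  have : (mW w).restrict (Ioo 0 1) = mW w := by
    refine Measure.restrict_eq_self_of_ae_mem ?_
    rw [mW, ae_withDensity_iff h.sw_meas]
    refine Filter.Eventually.of_forall fun x hx => ?_
    by_contra hx2
    apply hx
    simp [h.supp x hx2]
  rw [this]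

lemma Hpow_le (h : NW w) {β : ℝ} (hβ : -1 < β) (r : ℝ) :
    ∫⁻ s in Ioo r 1, ENNReal.ofReal (hat1 w s ^ β) ∂(mW w) ≤
      ENNReal.ofReal (hat1 w r ^ (β+1) / (β+1)) := by
  rw [← lint_pow hβ (h.hat1_nn r)]
  refine le_trans (lintegral_mono_set (fun x hx => hx.1 : Ioo r 1 ⊆ Ioi r)) ?_
  exact h.lint_H_le (φ := fun u => ENNReal.ofReal (u ^ β)) (by fun_prop) r

lemma Hpow_eq (h : NW w) (β : ℝ)  :
    ∫⁻ s in Ioo 0 1, ENNReal.ofReal (hat1 w s ^ β) ∂(mW w) =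
      ∫⁻ u in Ioc 0 (hat1 w 0), ENNReal.ofReal (u ^ β) := by
  rw [h.mW_Ioo]
  exact h.lint_H (φ := fun u => ENNReal.ofReal (u ^ β)) (by fun_prop)

lemma ApE_iff (h : NW w) {p α : ℝ} (hp : 1 < p) (hα : -1 < α) :
    ApE p w (fun s => w s * hat1 w s ^ α) < ⊤ ↔ α < p - 1 := by
  have hp0 : 0 < p := by linarith
  have hp1 : 0 < p - 1 := by linarith
  have hip : 1 / p < 1 := by rw [div_lt_one hp0]; exact hp
  have hip' : 0 < 1 - 1 / p := by linarith
  constructor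
  · intro hlt
    by_contra hle
    push Not at hle
    have h0 : (0:ℝ) ∈ Ico (0:ℝ) 1 := ⟨le_rfl, one_pos⟩
    have hle2 := (le_iSup₂ (f := fun r (_ : r ∈ Ico (0:ℝ) 1) => 
      (∫⁻ s in Set.Ioo r 1, ENNReal.ofReal (s * (w s * hat1 w s ^ α))) ^ (1 / p) *
      (∫⁻ s in Set.Ioo r 1, ENNReal.ofReal s * sigmaE p w (fun s => w s * hat1 w s ^ α) s) ^ (1 - 1 / p) /
      ENNReal.ofReal (hat1 w r)) 0 h0).trans_lt hlt
    rw [h.nu_eq α le_rfl, h.sig_eq α hp le_rfl, h.Hpow_eq, h.Hpow_eq, lint_pow hα (h.hat1_nn 0),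
      lint_pow_top _ (h.hat1_pos one_pos), ENNReal.top_rpow_of_pos hip', ENNReal.mul_top,
      ENNReal.top_div_of_ne_top ENNReal.ofReal_ne_top] at hle2
    · exact lt_irrefl _ hle2
    · have := h.hat1_pos one_pos
      have h3 : 0 < hat1 w 0 ^ (α+1) / (α+1) := div_pos (Real.rpow_pos_of_pos this _) (by linarith)
      rw [ENNReal.ofReal_rpow_of_pos h3]
      simp only [ne_eq, ENNReal.ofReal_eq_zero, not_le]
      positivity
    · rw [neg_div, neg_le_neg_iff, le_div_iff₀ hp1]; linarith
  · intro hlt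
    set β := -α/(p-1) with hβ
    have hβ1 : -1 < β := by rw [hβ, neg_div, neg_lt_neg_iff, div_lt_one hp1]; exact hlt
    have hb : 0 < β + 1 := by linarith
    have ha : 0 < α + 1 := by linarith
    have hexp : (α + 1) * (1/p) + (β+1) * (1-1/p) = 1 := by
      rw [hβ]; field_simp; ring
    refine lt_of_le_of_lt (b := ENNReal.ofReal ((1/(α+1))^(1/p) * (1/(β+1))^(1-1/p))) ?_ ENNReal.ofReal_lt_top
    refine iSup₂_le fun r hr => ?_
    rw [h.nu_eq α hr.1, h.sig_eq α hp hr.1]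
    have hH := h.hat1_pos hr.2
    refine ENNReal.div_le_of_le_mul ?_
    refine (mul_le_mul' (ENNReal.rpow_le_rpow (h.Hpow_le hα r) (by positivity))
      (ENNReal.rpow_le_rpow (h.Hpow_le hβ1 r) hip'.le)).trans ?_
    rw [ENNReal.ofReal_rpow_of_pos (by positivity), ENNReal.ofReal_rpow_of_pos (by positivity),
      ← ENNReal.ofReal_mul (by positivity), ← ENNReal.ofReal_mul (by positivity)]
    refine le_of_eq (congrArg _ ?_)
    rw [div_eq_mul_one_div, div_eq_mul_one_div (_ ^ (β+1)), Real.mul_rpow (by positivity) (by positivity),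
      Real.mul_rpow (by positivity) (by positivity), ← Real.rpow_mul hH.le, ← Real.rpow_mul hH.le]
    have : hat1 w r = hat1 w r ^ ((α + 1) * (1/p)) * hat1 w r ^ ((β+1) * (1-1/p)) := by
      rw [← Real.rpow_add hH, hexp, Real.rpow_one]
    conv_rhs => rw [this]
    ring
end NW

end

section

lemma measurable_pt : Measurable fun x : ℝ × ℝ => pt x.1 x.2 := continuous_pt.measurable

lemma pol {F : ℂ → ℝ≥0∞} (hF : Measurable F) :
    ∫⁻ z in ball (0:ℂ) 1, F z = ∫⁻ r in Ioo (0:ℝ) 1, ENNReal.ofReal r * ∫⁻ θ, F (pt r θ) ∂cm := by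
  have hI : Measurable ((ball (0:ℂ) 1).indicator F) := hF.indicator measurableSet_ball
  rw [← lintegral_indicator measurableSet_ball, ← Complex.lintegral_comp_polarCoord_symm]
  have e1 : ∀ x : ℝ × ℝ, Complex.polarCoord.symm x = pt x.1 x.2 := by
    intro x
    rw [Complex.polarCoord_symm_apply, pt, Complex.exp_mul_I, Complex.ofReal_cos, Complex.ofReal_sin]
  simp_rw [e1, smul_eq_mul]
  have e2 : (volume : Measure (ℝ × ℝ)).restrict polarCoord.target = (volume.restrict (Ioi 0)).prod cm := by
    rw [cm, Measure.prod_restrict]; rfl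
  rw [e2, lintegral_prod _ (by
    exact ((measurable_fst.ennreal_ofReal).mul (hI.comp measurable_pt)).aemeasurable)]
  have e3 : Ioo (0:ℝ) 1 = Ioi 0 ∩ Iio 1 := by ext x; simp
  rw [e3, inter_comm, ← Measure.restrict_restrict measurableSet_Iio, ← lintegral_indicator measurableSet_Iio]
  refine setLIntegral_congr_fun measurableSet_Ioi fun r hr => ?_
  have hr0 : 0 < r := hr
  show ∫⁻ y, ENNReal.ofReal r * (ball (0:ℂ) 1).indicator F (pt r y) ∂cm = _
  rw [lintegral_const_mul' _ _ ENNReal.ofReal_ne_top]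
  by_cases h1 : r < 1
  · rw [indicator_of_mem (mem_Iio.2 h1)]
    congr 2; ext t
    rw [indicator_of_mem]
    rw [mem_ball_zero_iff, norm_pt, abs_of_pos hr0]; exact h1
  · rw [indicator_of_notMem (by simpa using h1)]
    have : ∀ y, (ball (0:ℂ) 1).indicator F (pt r y) = 0 := by
      intro y
      rw [indicator_of_notMem]
      rw [mem_ball_zero_iff, norm_pt, abs_of_pos hr0]; exact h1
    simp [this]

/-- Radial a.e. equality transfers to the disc. -/
lemma ae_norm {P : ℝ → Prop} (hP : ∀ᵐ r ∂(volume.restrict (Ioo (0:ℝ) 1)), P r) :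
    ∀ᵐ z ∂(volume.restrict (ball (0:ℂ) 1)), P ‖z‖ := by
  obtain ⟨N, hN, hNm, hN0⟩ := exists_measurable_superset_of_null (ae_iff.1 hP)
  rw [ae_iff]
  refine measure_mono_null (t := (fun z : ℂ => ‖z‖) ⁻¹' N) (fun z hz => hN hz) ?_
  have hm : MeasurableSet ((fun z : ℂ => ‖z‖) ⁻¹' N) := measurable_norm hNm
  rw [← lintegral_indicator_one hm, pol (measurable_one.indicator hm)]
  have h0 : ∀ᵐ r ∂(volume.restrict (Ioo (0:ℝ) 1)), r ∉ N := measure_eq_zero_iff_ae_notMem.1 hN0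
  rw [lintegral_eq_zero_iff' ?_]
  · filter_upwards [h0, ae_restrict_mem measurableSet_Ioo] with r hr hr1
    have : ∀ θ, ((fun z : ℂ => ‖z‖) ⁻¹' N).indicator (1 : ℂ → ℝ≥0∞) (pt r θ) = 0 := by
      intro θ
      rw [indicator_of_notMem]
      rw [mem_preimage, norm_pt, abs_of_pos hr1.1]; exact hr
    simp [this]
  · have : Measurable fun x : ℝ × ℝ => ((fun z : ℂ => ‖z‖) ⁻¹' N).indicator (1 : ℂ → ℝ≥0∞) (pt x.1 x.2) :=
      (measurable_one.indicator hm).comp measurable_pt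
    exact (measurable_id.ennreal_ofReal.mul this.lintegral_prod_right').aemeasurable

/-- The measure `ω dA` (unnormalized) on the disc. -/
def muW (w : ℝ → ℝ) : Measure ℂ :=
  (volume.restrict (ball (0:ℂ) 1)).withDensity fun z => ENNReal.ofReal (w ‖z‖)

namespace NW
variable {w : ℝ → ℝ}

lemma wn_meas (h : NW w) : Measurable fun z : ℂ => ENNReal.ofReal (w ‖z‖) :=
  (h.meas.comp measurable_norm).ennreal_ofReal

lemma lint_muW0 (h : NW w) {F : ℂ → ℝ≥0∞} (hF : Measurable F) :
    ∫⁻ z, F z ∂(muW w) = ∫⁻ z in ball (0:ℂ) 1, ENNReal.ofReal (w ‖z‖) * F z := by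
  rw [muW, lintegral_withDensity_eq_lintegral_mul _ h.wn_meas hF]; rfl

lemma lint_muW (h : NW w) {F : ℂ → ℝ≥0∞} (hF : Measurable F) :
    ∫⁻ z, F z ∂(muW w) = ∫⁻ s, ∫⁻ t, F (pt s t) ∂cm ∂(mW w) := by
  have hm : Measurable fun s => ∫⁻ t, F (pt s t) ∂cm :=
    (hF.comp measurable_pt).lintegral_prod_right'
  rw [h.lint_muW0 hF, pol (F := fun z => ENNReal.ofReal (w ‖z‖) * F z) (h.wn_meas.mul hF), ← h.mW_Ioo, h.lint_mW hm measurableSet_Ioo]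
  refine setLIntegral_congr_fun measurableSet_Ioo fun s hs => ?_
  simp only [norm_pt, abs_of_pos hs.1]
  rw [lintegral_const_mul' _ _ ENNReal.ofReal_ne_top, ← mul_assoc, ← ENNReal.ofReal_mul hs.1.le]

lemma muW_eq (h : NW w) : muW w = ((mW w).prod cm).map fun x => pt x.1 x.2 := by
  have := h.finm
  ext A hA
  rw [← lintegral_indicator_one hA, h.lint_muW (measurable_one.indicator hA),
    ← lintegral_indicator_one hA, lintegral_map (measurable_one.indicator hA) measurable_pt,
    lintegral_prod (fun x : ℝ × ℝ => A.indicator 1 (pt x.1 x.2))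
      ((measurable_one.indicator hA).comp measurable_pt).aemeasurable]

end NW

end

section

/-- The kernel as a one-variable power series. -/
def kern (w : ℝ → ℝ) (x : ℂ) : ℂ := ∑' n : ℕ, x ^ n / ((2 * moment w n : ℝ) : ℂ)

lemma conj_Bker (w : ℝ → ℝ) (z ζ : ℂ) :
    (starRingEnd ℂ) (Bker w z ζ) = kern w (z * (starRingEnd ℂ) ζ) := by
  unfold Bker kern
  rw [Complex.conj_tsum]
  congr 1; ext n
  rw [map_div₀, map_pow, map_mul, Complex.conj_conj, Complex.conj_ofReal]

lemma norm_Bker (w : ℝ → ℝ) (z ζ : ℂ) : ‖Bker w z ζ‖ = ‖kern w (z * (starRingEnd ℂ) ζ)‖ := by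
  rw [← conj_Bker, RCLike.norm_conj]

namespace NW
variable {w : ℝ → ℝ}

lemma mom_eq (h : NW w) (n : ℕ) : moment w n = ∫ s, s ^ (2*n) * (s * w s) := by
  unfold moment
  rw [setIntegral_eq_integral_of_forall_compl_eq_zero]
  · congr 1; ext s; ring
  · intro x hx; rw [h.supp x hx, mul_zero]

lemma pow_int (h : NW w) (n : ℕ) : Integrable fun s => s ^ n * (s * w s) := by
  refine h.sw_int.mono' ((measurable_id.pow_const n).mul (measurable_id.mul h.meas)).aestronglyMeasurable
    (Filter.Eventually.of_forall fun s => ?_)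
  by_cases hs : s ∈ Ioo (0:ℝ) 1
  · have : 0 ≤ s ^ n * (s * w s) := mul_nonneg (pow_nonneg hs.1.le _) (h.sw_nn s)
    rw [Real.norm_of_nonneg this]
    exact mul_le_of_le_one_left (h.sw_nn s) (pow_le_one₀ hs.1.le hs.2.le)
  · simp [h.supp s hs]

lemma mom_lower (h : NW w) {t : ℝ} (ht : 0 ≤ t) (n : ℕ) : t ^ (2*n) * hat1 w t ≤ moment w n := by
  rw [h.mom_eq, h.hat1_eq, ← integral_const_mul]
  refine le_trans (setIntegral_mono_on (h.sw_int.const_mul _).integrableOn (h.pow_int (2*n)).integrableOn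
    measurableSet_Ioi ?_) (setIntegral_le_integral (h.pow_int _) (Filter.Eventually.of_forall fun s => ?_))
  · intro x hx
    have hx' : t < x := hx
    gcongr
    exact h.sw_nn x
  · exact mul_nonneg (by rw [pow_mul]; positivity) (h.sw_nn s)

lemma mom_pos (h : NW w) (n : ℕ) : 0 < moment w n := by
  have := h.mom_lower (t := 1/2) (by norm_num) n
  have h2 := h.hat1_pos (r := 1/2) (by norm_num)
  exact lt_of_lt_of_le (by positivity) this

lemma logconv (h : NW w) (n : ℕ) : moment w (n+1) ^ 2 ≤ moment w n * moment w (n+2) := by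
  have hm := h.mom_pos n
  set x := moment w (n+1) / moment w n with hx
  have key : 0 ≤ x^2 * moment w n - 2 * x * moment w (n+1) + moment w (n+2) := by
    have : 0 ≤ ∫ s, (x^2 * (s ^ (2*n) * (s * w s)) - 2 * x * (s^(2*(n+1)) * (s * w s)) + s^(2*(n+2)) * (s * w s)) := by
      refine integral_nonneg fun s => ?_
      have e : (x^2 * (s ^ (2*n) * (s * w s)) - 2 * x * (s^(2*(n+1)) * (s * w s)) + s^(2*(n+2)) * (s * w s))
        = (s^n * (x - s^2))^2 * (s * w s) := by ring
      show 0 ≤ x^2 * (s ^ (2*n) * (s * w s)) - 2 * x * (s^(2*(n+1)) * (s * w s)) + s^(2*(n+2)) * (s * w s)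
      rw [e]
      exact mul_nonneg (sq_nonneg _) (h.sw_nn s)
    rw [integral_add, integral_sub, integral_const_mul, integral_const_mul, ← h.mom_eq, ← h.mom_eq, ← h.mom_eq] at this
    · exact this
    · exact (h.pow_int _).const_mul _
    · exact (h.pow_int _).const_mul _
    · exact ((h.pow_int _).const_mul _).sub ((h.pow_int _).const_mul _)
    · exact h.pow_int _
  have e1 : x * moment w n = moment w (n+1) := by rw [hx]; field_simp
  nlinarith [mul_nonneg hm.le key]

lemma term_bd (h : NW w) {ρ t : ℝ} (ht0 : 0 < t) (ht : t < 1) {x : ℂ} (hx : ‖x‖ ≤ ρ) (n : ℕ) :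
    ‖x ^ n / ((2 * moment w n : ℝ) : ℂ)‖ ≤ (ρ / t^2) ^ n * (1 / (2 * hat1 w t)) := by
  have hm := h.mom_pos n
  have hH := h.hat1_pos ht
  rw [norm_div, norm_pow, Complex.norm_real, Real.norm_of_nonneg (by positivity), div_pow, ← pow_mul]
  have h1 := h.mom_lower ht0.le n
  have : ‖x‖^n ≤ ρ^n := by gcongr
  have hρ : 0 ≤ ρ := (norm_nonneg _).trans hx
  calc _ ≤ ρ^n / (2 * (t^(2*n) * hat1 w t)) := by gcongr
    _ = _ := by field_simp

lemma kern_bd (h : NW w) {ρ : ℝ} (hρ0 : 0 ≤ ρ) (hρ : ρ < 1) : ∃ u : ℕ → ℝ, Summable u ∧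
    ∀ n, ∀ x : ℂ, ‖x‖ ≤ ρ → ‖x ^ n / ((2 * moment w n : ℝ) : ℂ)‖ ≤ u n := by
  set t := Real.sqrt ((1+ρ)/2) with ht
  have ht2 : t^2 = (1+ρ)/2 := Real.sq_sqrt (by linarith)
  have ht0 : 0 < t := Real.sqrt_pos.2 (by linarith)
  have ht1 : t < 1 := by
    by_contra hc
    push Not at hc
    nlinarith
  refine ⟨fun n => (ρ / t^2) ^ n * (1 / (2 * hat1 w t)), ?_, fun n x hx => h.term_bd ht0 ht1 hx n⟩
  refine Summable.mul_right _ (summable_geometric_of_lt_one (by positivity) ?_)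
  rw [div_lt_one (by positivity), ht2]; linarith

lemma kern_le (h : NW w) {ρ : ℝ} (hρ0 : 0 ≤ ρ) (hρ : ρ < 1) : ∃ K : ℝ, ∀ x : ℂ, ‖x‖ ≤ ρ → ‖kern w x‖ ≤ K := by
  obtain ⟨u, hu, hb⟩ := h.kern_bd hρ0 hρ
  exact ⟨∑' n, u n, fun x hx => tsum_of_norm_bounded hu.hasSum fun n => hb n x hx⟩

lemma kern_cont (h : NW w) : ContinuousOn (kern w) (ball 0 1) := by
  intro x hx
  rw [mem_ball_zero_iff] at hx
  obtain ⟨u, hu, hb⟩ := h.kern_bd (ρ := (1+‖x‖)/2) (by positivity) (by linarith)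
  have : ContinuousOn (kern w) (closedBall 0 ((1+‖x‖)/2)) := by
    refine continuousOn_tsum (fun n => ?_) hu fun n y hy => hb n y (by simpa using hy)
    fun_prop
  refine (this.continuousAt (Filter.mem_of_superset (isOpen_ball.mem_nhds ?_) ball_subset_closedBall)).continuousWithinAt
  rw [mem_ball_zero_iff]; linarith

lemma kern_low (h : NW w) : ∃ ε > 0, ε < 1 ∧ ∃ κ > 0, ∀ x : ℂ, ‖x‖ < ε → κ ≤ ‖kern w x‖ := by
  have hm := h.mom_pos 0
  have h0 : kern w 0 = ((1 / (2 * moment w 0) : ℝ) : ℂ) := by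
    unfold kern
    rw [tsum_eq_single 0]
    · simp
    · intro n hn; simp [hn]
  have hc : ContinuousAt (kern w) 0 := h.kern_cont.continuousAt (ball_mem_nhds _ one_pos)
  have h1 : (1 / (4 * moment w 0)) < ‖kern w 0‖ := by
    rw [h0, Complex.norm_real, Real.norm_of_nonneg (by positivity)]
    gcongr; norm_num
  have := hc.norm.eventually_const_lt h1
  rw [Metric.eventually_nhds_iff] at this
  obtain ⟨ε, he, hε⟩ := this
  refine ⟨min ε (1/2), by positivity, by linarith [min_le_right ε (1/2)], 1 / (4 * moment w 0), by positivity, fun x hx => ?_⟩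
  refine (hε ?_).le
  rw [dist_zero_right]; exact hx.trans_le (min_le_left _ _)

/-- Measurable version of the kernel. -/
lemma kern_meas (h : NW w) : Measurable ((ball (0:ℂ) 1).indicator (kern w)) := by
  classical
  rw [← piecewise_eq_indicator]
  exact h.kern_cont.measurable_piecewise continuousOn_const measurableSet_ball

lemma kern_mult (h : NW w) {p : ℝ} (hp : 1 < p) : ∃ A : ℝ≥0, ∀ ρ, 0 ≤ ρ → ρ < 1 → ∀ g : ℝ → ℂ, Measurable g →
    Integrable g cm → ∫⁻ θ, ‖∫ t, g t * kern w (pt ρ (θ-t)) ∂cm‖ₑ^p ∂cm ≤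
      A * (ENNReal.ofReal ((hat1 w ρ)⁻¹))^p * ∫⁻ t, ‖g t‖ₑ^p ∂cm := by
  obtain ⟨C, hC⟩ := mult_bdd hp
  obtain ⟨D, hD, hdbl⟩ := h.dbl
  refine ⟨C * (Real.toNNReal (D^2))^p, fun ρ h0 h1 g hg hgi => ?_⟩
  set q := Real.sqrt ρ with hq
  have hq0 : 0 ≤ q := Real.sqrt_nonneg _
  have hq1 : q < 1 := by rw [hq, Real.sqrt_lt' one_pos]; simpa using h1
  have hqq : q * q = ρ := Real.mul_self_sqrt h0
  set t := Real.sqrt q with ht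
  have ht0 : 0 ≤ t := Real.sqrt_nonneg _
  have ht1 : t < 1 := by rw [ht, Real.sqrt_lt' one_pos]; simpa using hq1
  have htt : t ^ 2 = q := Real.sq_sqrt hq0
  have hH := h.hat1_pos h1
  have hHt := h.hat1_pos ht1
  set a : ℕ → ℝ := fun n => q^n / (2 * moment w n) with ha
  have hS : ∀ n, a n ≤ D^2 * (hat1 w ρ)⁻¹ := by
    intro n
    have hm := h.mom_pos n
    have h2 := h.mom_lower ht0 n
    rw [pow_mul, htt] at h2
    have h3 : hat1 w ρ ≤ D^2 * hat1 w t := by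
      calc _ ≤ D * hat1 w q := hdbl ρ ⟨h0, h1⟩
        _ ≤ D * (D * hat1 w t) := by gcongr; exact hdbl q ⟨hq0, hq1⟩
        _ = _ := by ring
    simp only [ha]
    rw [div_le_iff₀ (by positivity), ← div_eq_mul_inv, div_mul_eq_mul_div, le_div_iff₀ hH]
    calc q^n * hat1 w ρ ≤ q^n * (D^2 * hat1 w t) := by gcongr
      _ = D^2 * (q^n * hat1 w t) := by ring
      _ ≤ D^2 * moment w n := by gcongr
      _ ≤ _ := by nlinarith [sq_nonneg D]
  have hmono : ∀ n, a (n+1) ≤ a n → a (n+2) ≤ a (n+1) := by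
    intro n hn
    have m0 := h.mom_pos n
    have m1 := h.mom_pos (n+1)
    have m2 := h.mom_pos (n+2)
    have hl := h.logconv n
    rcases hq0.eq_or_lt with hq' | hq'
    · simp only [ha, ← hq']; simp
    have hn' : q * moment w n ≤ moment w (n+1) := by
      simp only [ha] at hn
      rw [div_le_div_iff₀ (by positivity) (by positivity), pow_succ] at hn
      have hqn : 0 < q^n := by positivity
      have : q^n * (q * moment w n) ≤ q^n * moment w (n+1) := by linarith
      exact le_of_mul_le_mul_left this hqn
    have hn2 : q * moment w (n+1) ≤ moment w (n+2) := by
      have : moment w n * (q * moment w (n+1)) ≤ moment w n * moment w (n+2) := by nlinarith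
      exact le_of_mul_le_mul_left this m0
    simp only [ha]
    rw [div_le_div_iff₀ (by positivity) (by positivity), pow_succ q (n+1)]
    have hqn : 0 < q^(n+1) := by positivity
    nlinarith
  have hk : ∀ φ, kern w (pt ρ φ) = ∑' n, (a n : ℂ) * pt q φ ^ n := by
    intro φ
    unfold kern
    congr 1; ext n
    rw [show pt ρ φ = (q:ℂ) * pt q φ by simp only [pt, ← hqq]; push_cast; ring, mul_pow]
    simp only [ha]; push_cast; ring
  have := hC a _ (fun n => by have := h.mom_pos n; positivity) hS hmono g hg hgi q hq0 hq1
  simp_rw [hk]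
  refine this.trans (le_of_eq ?_)
  congr 1
  rw [ENNReal.ofReal_mul (by positivity), ENNReal.mul_rpow_of_nonneg _ _ (by linarith)]
  push_cast
  rw [ENNReal.coe_rpow_of_nonneg _ (by linarith : 0 ≤ p), mul_assoc]; rfl

end NW

end

section

lemma cv_log {c : ℝ} (hc : 0 < c) (γ : ℝ) :
    ∫⁻ u in Ioc 0 c, ENNReal.ofReal (u⁻¹ * (1 + |Real.log u|) ^ (-γ)) =
      ∫⁻ x in Ici (-Real.log c), ENNReal.ofReal ((1 + |x|) ^ (-γ)) := by
  have him : (fun x : ℝ => Real.exp (-x)) '' (Ici (-Real.log c)) = Ioc 0 c := by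
    ext u
    simp only [mem_image, mem_Ici, mem_Ioc]
    constructor
    · rintro ⟨x, hx, rfl⟩
      refine ⟨Real.exp_pos _, ?_⟩
      rw [← Real.le_log_iff_exp_le hc]; linarith
    · rintro ⟨h0, h1⟩
      refine ⟨-Real.log u, ?_, by rw [neg_neg, Real.exp_log h0]⟩
      exact neg_le_neg (Real.log_le_log h0 h1)
  rw [← him, lintegral_image_eq_lintegral_abs_deriv_mul (f' := fun x => -Real.exp (-x)) measurableSet_Ici]
  · refine lintegral_congr fun x => ?_
    have hx := Real.exp_pos (-x)
    rw [Real.log_exp, abs_neg, abs_neg, abs_of_pos hx, ← ENNReal.ofReal_mul hx.le, ← mul_assoc,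
      mul_inv_cancel₀ hx.ne', one_mul]
  · intro x _
    have := (hasDerivAt_neg x).exp
    simp only [mul_neg, mul_one] at this
    exact this.hasDerivWithinAt
  · intro x _ y _ hxy
    simpa using hxy

lemma phi_fin {c γ : ℝ} (hc : 0 < c) (hγ : 1 < γ) :
    ∫⁻ u in Ioc 0 c, ENNReal.ofReal (u⁻¹ * (1 + |Real.log u|) ^ (-γ)) < ⊤ := by
  rw [cv_log hc]
  have hi : Integrable (fun x : ℝ => (1 + ‖x‖) ^ (-γ)) := integrable_one_add_norm (by simpa using hγ)
  refine (setLIntegral_le_lintegral _ _).trans_lt ?_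
  have := hi.2
  rw [hasFiniteIntegral_iff_ofReal (Filter.Eventually.of_forall fun x => by positivity)] at this
  exact this

lemma phi_inf {c : ℝ} (hc : 0 < c) :
    ∫⁻ u in Ioc 0 c, ENNReal.ofReal (u⁻¹ * (1 + |Real.log u|) ^ (-1:ℝ)) = ⊤ := by
  rw [cv_log hc]
  by_contra hne
  set b := max (-Real.log c) 1 with hb
  have hb1 : 1 ≤ b := le_max_right _ _
  have : IntegrableOn (fun x : ℝ => x⁻¹) (Ioi b) := by
    have h2 : IntegrableOn (fun x : ℝ => (1 + |x|) ^ (-1:ℝ)) (Ioi b) := by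
      refine ⟨Measurable.aestronglyMeasurable (by fun_prop), ?_⟩
      rw [hasFiniteIntegral_iff_ofReal (Filter.Eventually.of_forall fun x => by positivity)]
      refine lt_of_le_of_lt (lintegral_mono_set fun x hx => ?_) (lt_top_iff_ne_top.2 hne)
      exact (le_max_left _ _).trans (le_of_lt (show b < x from hx))
    refine (h2.const_mul 2).mono' (by fun_prop) ?_
    refine (ae_restrict_iff' measurableSet_Ioi).2 (Filter.Eventually.of_forall fun x hx => ?_)
    have hx1 : 1 < x := hb1.trans_lt hx
    have hx0 : 0 < x := by linarith
    rw [Real.rpow_neg_one, abs_of_pos hx0, Real.norm_of_nonneg (by positivity), ← div_eq_mul_inv,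
      inv_eq_one_div, div_le_div_iff₀ hx0 (by linarith)]
    linarith
  exact not_integrableOn_Ioi_inv this

/-- The extremal test function. -/
def phi (u : ℝ) : ℝ := u⁻¹ * (1 + |Real.log u|) ^ (-1:ℝ)

lemma phi_meas : Measurable phi := by unfold phi; fun_prop

lemma lint_rad {w : ℝ → ℝ} (h : NW w) {φ : ℝ → ℝ≥0∞} (hφ : Measurable φ) :
    ∫⁻ z in ball (0:ℂ) 1, ENNReal.ofReal (w ‖z‖) * φ (hat1 w ‖z‖) =
      ENNReal.ofReal (2 * Real.pi) * ∫⁻ u in Ioc 0 (hat1 w 0), φ u := by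
  have hm : Measurable fun z : ℂ => φ (hat1 w ‖z‖) :=
    hφ.comp (h.hat1_cont.measurable.comp measurable_norm)
  rw [← h.lint_muW0 hm, h.lint_muW hm, ← h.lint_H hφ, ← lintegral_const_mul' _ _ ENNReal.ofReal_ne_top,
    ← h.mW_Ioo, ← h.mW_Ioo (fun s => ENNReal.ofReal (2 * Real.pi) * φ (hat1 w s))]
  refine setLIntegral_congr_fun measurableSet_Ioo fun s hs => ?_
  simp only [norm_pt, abs_of_pos hs.1, lintegral_const, cm_univ]
  rw [mul_comm]

lemma nec {w : ℝ → ℝ} (h : NW w) {p α : ℝ} (hp : 1 < p) 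
    (hB : PwBounded p w (fun s => w s * hat1 w s ^ α)) : α < p - 1 := by
  by_contra hle
  push Not at hle
  have hp0 : 0 < p := by linarith
  obtain ⟨C, -, hC⟩ := hB
  have hc := h.hat1_pos one_pos
  set c := hat1 w 0 with hcdef
  set f : ℂ → ℂ := fun z => ((phi (hat1 w ‖z‖) : ℝ) : ℂ) with hf
  have hfm : Measurable f :=
    Complex.measurable_ofReal.comp (phi_meas.comp (h.hat1_cont.measurable.comp measurable_norm))
  have hphi : ∀ u, 0 < u → 0 < phi u := fun u hu => by unfold phi; positivity
  have hfn : ∀ z ∈ ball (0:ℂ) 1, ‖f z‖ = phi (hat1 w ‖z‖) := by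
    intro z hz
    rw [mem_ball_zero_iff] at hz
    simp only [hf]
    rw [Complex.norm_real, Real.norm_of_nonneg (hphi _ (h.hat1_pos hz)).le]
  have hL : LpC p (fun s => w s * hat1 w s ^ α) f < ⊤ := by
    unfold LpC
    refine ENNReal.rpow_lt_top_of_nonneg (by positivity) (ENNReal.div_ne_top ?_ (by simp [Real.pi_pos]))
    refine ne_of_lt (lt_of_le_of_lt (b := ENNReal.ofReal (2 * Real.pi) *
      ∫⁻ u in Ioc 0 c, ENNReal.ofReal (c^(α-p+1)) * ENNReal.ofReal (u⁻¹ * (1 + |Real.log u|) ^ (-p))) ?_ ?_)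
    · calc _ = ∫⁻ z in ball (0:ℂ) 1, ENNReal.ofReal (w ‖z‖) *
            (fun u => ENNReal.ofReal (phi u ^ p * u ^ α)) (hat1 w ‖z‖) := by
            refine setLIntegral_congr_fun measurableSet_ball fun z hz => ?_
            show ENNReal.ofReal (‖f z‖ ^ p * (w ‖z‖ * hat1 w ‖z‖ ^ α)) = 
              ENNReal.ofReal (w ‖z‖) * ENNReal.ofReal (phi (hat1 w ‖z‖) ^ p * hat1 w ‖z‖ ^ α)
            rw [hfn z hz, ← ENNReal.ofReal_mul (h.nn _)]
            congr 1; ring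
        _ = _ := lint_rad h (φ := fun u => ENNReal.ofReal (phi u ^ p * u ^ α)) (by have := phi_meas; fun_prop)
        _ ≤ _ := by
            gcongr ENNReal.ofReal (2 * Real.pi) * ?_
            refine setLIntegral_mono' measurableSet_Ioc fun u hu => ?_
            rw [← ENNReal.ofReal_mul (by positivity)]
            refine ENNReal.ofReal_le_ofReal ?_
            have hu0 : 0 < u := hu.1
            have e1 : phi u ^ p * u ^ α = u ^ (α - p + 1) * (u⁻¹ * (1 + |Real.log u|) ^ (-p)) := by
              unfold phi
              rw [Real.mul_rpow (by positivity) (by positivity), ← Real.rpow_mul (by positivity),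
                ← Real.rpow_neg_one u, ← Real.rpow_mul hu0.le]
              rw [mul_right_comm, ← mul_assoc, ← Real.rpow_add hu0, ← Real.rpow_add hu0]
              ring_nf
            rw [e1]
            gcongr
            · linarith
            · exact hu.2
    · rw [lintegral_const_mul' _ _ ENNReal.ofReal_ne_top]
      exact ENNReal.mul_lt_top ENNReal.ofReal_lt_top (ENNReal.mul_lt_top ENNReal.ofReal_lt_top (phi_fin hc hp))
  obtain ⟨hae, -⟩ := hC f hfm hL
  obtain ⟨ε, hε, hε1, κ, hκ, hk⟩ := h.kern_low
  have htop : ∀ z ∈ ball (0:ℂ) ε, ∫⁻ ζ in ball (0:ℂ) 1, ENNReal.ofReal (‖f ζ‖ * ‖Bker w z ζ‖ * w ‖ζ‖) = ⊤ := by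
    intro z hz
    rw [mem_ball_zero_iff] at hz
    rw [eq_top_iff]
    calc (⊤:ℝ≥0∞) = ENNReal.ofReal κ * ∫⁻ z in ball (0:ℂ) 1, ENNReal.ofReal (w ‖z‖) *
            (fun u => ENNReal.ofReal (phi u)) (hat1 w ‖z‖) := by
          rw [lint_rad h (φ := fun u => ENNReal.ofReal (phi u)) (by have := phi_meas; fun_prop)]
          unfold phi
          rw [phi_inf hc, ENNReal.mul_top, ENNReal.mul_top]
          · simpa using hκ
          · simp [Real.pi_pos]
      _ = ∫⁻ z in ball (0:ℂ) 1, ENNReal.ofReal κ * (ENNReal.ofReal (w ‖z‖) *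
            ENNReal.ofReal (phi (hat1 w ‖z‖))) := (lintegral_const_mul' _ _ ENNReal.ofReal_ne_top).symm
      _ ≤ _ := by
          refine setLIntegral_mono' measurableSet_ball fun ζ hζ => ?_
          rw [← ENNReal.ofReal_mul (h.nn _), ← ENNReal.ofReal_mul hκ.le]
          refine ENNReal.ofReal_le_ofReal ?_
          rw [hfn ζ hζ]
          rw [mem_ball_zero_iff] at hζ
          have hp1 := hphi _ (h.hat1_pos hζ)
          have : κ ≤ ‖Bker w z ζ‖ := by
            rw [norm_Bker]
            refine hk _ ?_
            rw [norm_mul, RCLike.norm_conj]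
            nlinarith [norm_nonneg z, norm_nonneg ζ]
          have hw := h.nn ‖ζ‖
          calc κ * (w ‖ζ‖ * phi (hat1 w ‖ζ‖)) ≤ ‖Bker w z ζ‖ * (w ‖ζ‖ * phi (hat1 w ‖ζ‖)) := by gcongr
            _ = _ := by ring
  have h0 : (volume.restrict (ball (0:ℂ) 1)) (ball (0:ℂ) ε) = 0 := by
    refine measure_mono_null (fun z hz => ?_) (ae_iff.1 hae)
    rw [mem_ofPred_eq, htop z hz]; simp
  rw [Measure.restrict_apply measurableSet_ball, inter_eq_left.2 (ball_subset_ball hε1.le)] at h0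
  exact (measure_ball_pos volume (0:ℂ) hε).ne' h0

end

section

/-- Kernel cut off to the disc. -/
def kern0 (w : ℝ → ℝ) : ℂ → ℂ := (ball (0:ℂ) 1).indicator (kern w)

/-- `ω̂₁^β` as an extended real. -/
def hpw (w : ℝ → ℝ) (β s : ℝ) : ℝ≥0∞ := ENNReal.ofReal (hat1 w s ^ β)

/-- `1 / max(ω̂₁(r), ω̂₁(s))`. -/
def Mr (w : ℝ → ℝ) (r s : ℝ) : ℝ≥0∞ := ENNReal.ofReal (max (hat1 w r) (hat1 w s))⁻¹

/-- The projection, as a measurable function on the whole plane. -/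
def Pg (w : ℝ → ℝ) (f : ℂ → ℂ) (z : ℂ) : ℂ :=
  (∫ ζ, f ζ * kern0 w (z * (starRingEnd ℂ) ζ) ∂(muW w)) / ((Real.pi : ℝ) : ℂ)

/-- Angular integral of the kernel against `f`. -/
def Gop (w : ℝ → ℝ) (f : ℂ → ℂ) (r s θ : ℝ) : ℂ :=
  ∫ t, f (pt s t) * kern0 w (pt (r * s) (θ - t)) ∂cm

namespace NW
variable {w : ℝ → ℝ}

lemma finmu (h : NW w) : IsFiniteMeasure (muW w) := by
  have := h.finm
  rw [h.muW_eq]; infer_instance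

lemma mW_ae (h : NW w) : ∀ᵐ s ∂(mW w), s ∈ Ioo (0:ℝ) 1 := by
  rw [mW, ae_withDensity_iff h.sw_meas]
  refine Filter.Eventually.of_forall fun x hx => ?_
  by_contra hx2
  apply hx
  simp [h.supp x hx2]

lemma muW_ae (h : NW w) : ∀ᵐ z ∂(muW w), z ∈ ball (0:ℂ) 1 :=
  (withDensity_absolutelyContinuous _ _).ae_le (ae_restrict_mem measurableSet_ball)

lemma hpw_meas (h : NW w) (β : ℝ) : Measurable (hpw w β) := h.Hpow_meas β

lemma hpwn_meas (h : NW w) (β : ℝ) : Measurable fun z : ℂ => hpw w β ‖z‖ := (h.Hpow_meas β).comp measurable_norm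

lemma hpw_add (h : NW w) {s : ℝ} (hs : s < 1) (β γ : ℝ) : hpw w β s * hpw w γ s = hpw w (β + γ) s := by
  have := h.hat1_pos hs
  rw [hpw, hpw, hpw, ← ENNReal.ofReal_mul (by positivity), Real.rpow_add this]

lemma hpw_zero (h : NW w) (s : ℝ) : hpw w 0 s = 1 := by simp [hpw]

lemma hpw_pow (h : NW w) {s : ℝ} (hs : s < 1) (β q : ℝ) : hpw w β s ^ q = hpw w (β * q) s := by
  have := h.hat1_pos hs
  rw [hpw, hpw, ENNReal.ofReal_rpow_of_pos (by positivity), Real.rpow_mul this.le]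

lemma Mr_meas (h : NW w) : Measurable fun x : ℝ × ℝ => Mr w x.1 x.2 := by
  have := h.hat1_cont.measurable
  unfold Mr; fun_prop

lemma Mr_int (h : NW w) {β r : ℝ} (h0 : 0 < β) (h1 : β < 1) (hr : r < 1) :
    ∫⁻ s, Mr w r s * hpw w (-β) s ∂(mW w) ≤ ENNReal.ofReal (1/(1-β) + 1/β) * hpw w (-β) r := by
  have hH := h.hat1_pos hr
  have h1' : 0 < 1 - β := by linarith
  have e : ∫⁻ s, Mr w r s * hpw w (-β) s ∂(mW w) = 
      ∫⁻ s, (fun u => ENNReal.ofReal ((max (hat1 w r) u)⁻¹ * u ^ (-β))) (hat1 w s) ∂(mW w) := by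
    refine lintegral_congr fun s => ?_
    rw [Mr, hpw]
    refine (ENNReal.ofReal_mul ?_).symm
    have := le_max_left (hat1 w r) (hat1 w s)
    exact inv_nonneg.2 (hH.le.trans this)
  rw [e, h.lint_H (φ := fun u => ENNReal.ofReal ((max (hat1 w r) u)⁻¹ * u ^ (-β))) (by fun_prop), hpw, ← ENNReal.ofReal_mul (by positivity)]
  exact lint_max h0 h1 hH

lemma kern0_meas (h : NW w) : Measurable (kern0 w) := h.kern_meas

lemma ker2_meas (h : NW w) : Measurable fun x : ℂ × ℂ => kern0 w (x.1 * (starRingEnd ℂ) x.2) :=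
  h.kern0_meas.comp (measurable_fst.mul ((RCLike.continuous_conj (K := ℂ)).measurable.comp measurable_snd))

lemma Pg_meas (h : NW w) {f : ℂ → ℂ} (hf : Measurable f) : Measurable (Pg w f) := by
  have := h.finmu
  unfold Pg
  refine Measurable.div_const ?_ _
  have hm : Measurable fun x : ℂ × ℂ => f x.2 * kern0 w (x.1 * (starRingEnd ℂ) x.2) :=
    (hf.comp measurable_snd).mul h.ker2_meas
  exact (hm.stronglyMeasurable.integral_prod_right').measurable

lemma mul_conj_mem (h : NW w) {z ζ : ℂ} (hz : ‖z‖ < 1) (hζ : ‖ζ‖ < 1) : z * (starRingEnd ℂ) ζ ∈ ball (0:ℂ) 1 := by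
  rw [mem_ball_zero_iff, norm_mul, RCLike.norm_conj]
  nlinarith [norm_nonneg z, norm_nonneg ζ]

lemma Pw_eq (h : NW w) {f : ℂ → ℂ} {z : ℂ} (hz : ‖z‖ < 1) : Pw w f z = Pg w f z := by
  unfold Pw Pg
  congr 1
  have e : muW w = (volume.restrict (ball (0:ℂ) 1)).withDensity
      fun z => ((Real.toNNReal (w ‖z‖) : ℝ≥0) : ℝ≥0∞) := rfl
  have hm : Measurable fun z : ℂ => Real.toNNReal (w ‖z‖) := (h.meas.comp measurable_norm).real_toNNReal
  rw [e, integral_withDensity_eq_integral_smul hm]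
  refine setIntegral_congr_fun measurableSet_ball fun ζ hζ => ?_
  rw [mem_ball_zero_iff] at hζ
  show f ζ * (starRingEnd ℂ) (Bker w z ζ) * ((w ‖ζ‖ : ℝ) : ℂ) = Real.toNNReal (w ‖ζ‖) • (f ζ * kern0 w (z * (starRingEnd ℂ) ζ))
  rw [conj_Bker, kern0, indicator_of_mem (h.mul_conj_mem hz hζ), NNReal.smul_def,
    Real.coe_toNNReal _ (h.nn _), Complex.real_smul, mul_comm]

lemma lp_eq (h : NW w) {g : ℂ → ℂ} (hg : Measurable g) {p α : ℝ} (hp : 1 < p) :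
    ∫⁻ z in ball (0:ℂ) 1, ENNReal.ofReal (‖g z‖ ^ p * (w ‖z‖ * hat1 w ‖z‖ ^ α)) =
      ∫⁻ s, hpw w α s * ∫⁻ t, ‖g (pt s t)‖ₑ ^ p ∂cm ∂(mW w) := by
  have hm : Measurable fun z : ℂ => hpw w α ‖z‖ * ‖g z‖ₑ ^ p :=
    (h.hpwn_meas α).mul (hg.enorm.pow_const p)
  calc _ = ∫⁻ z in ball (0:ℂ) 1, ENNReal.ofReal (w ‖z‖) * (hpw w α ‖z‖ * ‖g z‖ₑ ^ p) := by
        refine setLIntegral_congr_fun measurableSet_ball fun z hz => ?_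
        show ENNReal.ofReal (‖g z‖ ^ p * (w ‖z‖ * hat1 w ‖z‖ ^ α)) = ENNReal.ofReal (w ‖z‖) * (hpw w α ‖z‖ * ‖g z‖ₑ ^ p)
        rw [ENNReal.ofReal_mul (by positivity), ENNReal.ofReal_mul (h.nn _), ← ofReal_norm,
          ENNReal.ofReal_rpow_of_nonneg (norm_nonneg _) (by linarith), hpw]
        ring
    _ = _ := by
        rw [← h.lint_muW0 hm, h.lint_muW hm]
        refine lintegral_congr_ae ?_
        filter_upwards [h.mW_ae] with s hs
        simp only [norm_pt, abs_of_pos hs.1]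
        rw [lintegral_const_mul' _ _ (by exact ENNReal.ofReal_ne_top)]

lemma lp_eq2 (h : NW w) {g : ℂ → ℂ} (hg : Measurable g) {p α : ℝ} (hp : 1 < p) :
    ∫⁻ z in ball (0:ℂ) 1, ENNReal.ofReal (‖g z‖ ^ p * (w ‖z‖ * hat1 w ‖z‖ ^ α)) =
      ∫⁻ z, hpw w α ‖z‖ * ‖g z‖ₑ ^ p ∂(muW w) := by
  have hm : Measurable fun z : ℂ => hpw w α ‖z‖ * ‖g z‖ₑ ^ p :=
    (h.hpwn_meas α).mul (hg.enorm.pow_const p)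
  rw [h.lp_eq hg hp, h.lint_muW hm]
  refine lintegral_congr_ae ?_
  filter_upwards [h.mW_ae] with s hs
  simp only [norm_pt, abs_of_pos hs.1]
  rw [lintegral_const_mul' _ _ (by exact ENNReal.ofReal_ne_top)]

lemma f_L1 (h : NW w) {f : ℂ → ℂ} (hf : Measurable f) {p α : ℝ} (hp : 1 < p) (hα : α < p - 1)
    (hI : ∫⁻ z in ball (0:ℂ) 1, ENNReal.ofReal (‖f z‖ ^ p * (w ‖z‖ * hat1 w ‖z‖ ^ α)) < ⊤) :
    ∫⁻ z, ‖f z‖ₑ ∂(muW w) < ⊤ := by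
  have hp0 : 0 < p := by linarith
  have hp1 : 0 < p - 1 := by linarith
  set b := α / (p-1) with hb
  have hb1 : b < 1 := by rw [hb, div_lt_one hp1]; exact hα
  have hF := wJ (muW w) hp (f := fun z => ‖f z‖ₑ * hpw w b ‖z‖) (c := fun z => hpw w (-b) ‖z‖)
    (hf.enorm.mul (h.hpwn_meas b)).aemeasurable (h.hpwn_meas (-b)).aemeasurable
  have e1 : ∫⁻ z, ‖f z‖ₑ * hpw w b ‖z‖ * hpw w (-b) ‖z‖ ∂(muW w) = ∫⁻ z, ‖f z‖ₑ ∂(muW w) := by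
    refine lintegral_congr_ae ?_
    filter_upwards [h.muW_ae] with z hz
    rw [mem_ball_zero_iff] at hz
    rw [mul_assoc, h.hpw_add hz, add_neg_cancel, h.hpw_zero, mul_one]
  have e2 : ∫⁻ z, (‖f z‖ₑ * hpw w b ‖z‖)^p * hpw w (-b) ‖z‖ ∂(muW w) =
      ∫⁻ z, hpw w α ‖z‖ * ‖f z‖ₑ ^ p ∂(muW w) := by
    refine lintegral_congr_ae ?_
    filter_upwards [h.muW_ae] with z hz
    rw [mem_ball_zero_iff] at hz
    rw [ENNReal.mul_rpow_of_nonneg _ _ hp0.le, h.hpw_pow hz, mul_assoc, h.hpw_add hz, mul_comm]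
    congr 2
    rw [hb]; field_simp; ring
  have e3 : ∫⁻ z, hpw w (-b) ‖z‖ ∂(muW w) < ⊤ := by
    rw [h.lint_muW0 (h.hpwn_meas _)]
    rw [show (∫⁻ z in ball (0:ℂ) 1, ENNReal.ofReal (w ‖z‖) * hpw w (-b) ‖z‖) = _ from
      lint_rad h (φ := fun u => ENNReal.ofReal (u ^ (-b))) (by fun_prop),
      lint_pow (by linarith) (h.hat1_nn 0)]
    exact ENNReal.mul_lt_top ENNReal.ofReal_lt_top ENNReal.ofReal_lt_top
  rw [e1, e2, ← h.lp_eq2 hf hp] at hF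
  have := hF.trans_lt (ENNReal.mul_lt_top hI (ENNReal.rpow_lt_top_of_nonneg hp1.le e3.ne))
  by_contra hne
  rw [not_lt, top_le_iff] at hne
  rw [hne, ENNReal.top_rpow_of_pos hp0] at this
  exact lt_irrefl _ this

lemma abs_conv (h : NW w) {f : ℂ → ℂ} (hL : ∫⁻ z, ‖f z‖ₑ ∂(muW w) < ⊤) {z : ℂ} (hz : ‖z‖ < 1) :
    ∫⁻ ζ, ‖f ζ * kern0 w (z * (starRingEnd ℂ) ζ)‖ₑ ∂(muW w) < ⊤ := by
  obtain ⟨K, hK⟩ := h.kern_le (norm_nonneg z) hz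
  refine lt_of_le_of_lt (b := ∫⁻ ζ, ‖f ζ‖ₑ * ENNReal.ofReal K ∂(muW w)) ?_ ?_
  · refine lintegral_mono_ae ?_
    filter_upwards [h.muW_ae] with ζ hζ
    rw [mem_ball_zero_iff] at hζ
    rw [enorm_mul, kern0, indicator_of_mem (h.mul_conj_mem hz hζ), ← ofReal_norm (kern w _)]
    gcongr
    refine hK _ ?_
    rw [norm_mul, RCLike.norm_conj]
    nlinarith [norm_nonneg z, norm_nonneg ζ]
  · rw [lintegral_mul_const' _ _ ENNReal.ofReal_ne_top]
    exact ENNReal.mul_lt_top hL ENNReal.ofReal_lt_top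

lemma abs_conv2 (h : NW w) {f : ℂ → ℂ} (hf : Measurable f) (hL : ∫⁻ z, ‖f z‖ₑ ∂(muW w) < ⊤) {z : ℂ} (hz : ‖z‖ < 1) :
    ∫⁻ ζ in ball (0:ℂ) 1, ENNReal.ofReal (‖f ζ‖ * ‖Bker w z ζ‖ * w ‖ζ‖) < ⊤ := by
  have hm : Measurable fun ζ => ‖f ζ * kern0 w (z * (starRingEnd ℂ) ζ)‖ₑ :=
    (hf.mul (h.ker2_meas.comp (measurable_const.prodMk measurable_id))).enorm
  have := h.abs_conv hL hz
  rw [h.lint_muW0 hm] at this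
  refine lt_of_le_of_lt (le_of_eq ?_) this
  refine setLIntegral_congr_fun measurableSet_ball fun ζ hζ => ?_
  rw [mem_ball_zero_iff] at hζ
  show ENNReal.ofReal (‖f ζ‖ * ‖Bker w z ζ‖ * w ‖ζ‖) = ENNReal.ofReal (w ‖ζ‖) * ‖f ζ * kern0 w (z * (starRingEnd ℂ) ζ)‖ₑ
  rw [norm_Bker, kern0, indicator_of_mem (h.mul_conj_mem hz hζ), ← norm_mul, ENNReal.ofReal_mul (norm_nonneg _),
    ofReal_norm, mul_comm]

lemma Pg_le (h : NW w) {f : ℂ → ℂ} (hf : Measurable f) (hL : ∫⁻ z, ‖f z‖ₑ ∂(muW w) < ⊤) {r : ℝ} (hr : r ∈ Ioo (0:ℝ) 1) (θ : ℝ) :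
    ‖Pg w f (pt r θ)‖ₑ ≤ ∫⁻ s, ‖Gop w f r s θ‖ₑ ∂(mW w) := by
  have := h.finm
  have hz : ‖pt r θ‖ < 1 := by rw [norm_pt, abs_of_pos hr.1]; exact hr.2
  have hm : Measurable fun ζ => f ζ * kern0 w (pt r θ * (starRingEnd ℂ) ζ) :=
    hf.mul (h.kern0_meas.comp ((RCLike.continuous_conj (K := ℂ)).measurable.const_mul (pt r θ)))
  have hi : Integrable (fun ζ => f ζ * kern0 w (pt r θ * (starRingEnd ℂ) ζ)) (muW w) :=
    ⟨hm.aestronglyMeasurable, h.abs_conv hL hz⟩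
  have e : ∀ s t, pt r θ * (starRingEnd ℂ) (pt s t) = pt (r * s) (θ - t) := by
    intro s t
    rw [conj_pt, pt_mul]; rfl
  have hi2 : Integrable (fun x : ℝ × ℝ => f (pt x.1 x.2) * kern0 w (pt (r * x.1) (θ - x.2))) ((mW w).prod cm) := by
    rw [h.muW_eq, integrable_map_measure hm.aestronglyMeasurable measurable_pt.aemeasurable] at hi
    refine hi.congr (Filter.Eventually.of_forall fun x => ?_)
    simp only [Function.comp, e]
  have hInt : (∫ ζ, f ζ * kern0 w (pt r θ * (starRingEnd ℂ) ζ) ∂(muW w)) = ∫ s, Gop w f r s θ ∂(mW w) := by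
    rw [h.muW_eq, integral_map measurable_pt.aemeasurable hm.aestronglyMeasurable]
    simp only [e]
    exact integral_prod _ hi2
  rw [Pg, hInt]
  have hd : ∀ a : ℂ, ‖a / ((Real.pi : ℝ) : ℂ)‖ₑ ≤ ‖a‖ₑ := by
    intro a
    rw [enorm_le_iff_norm_le, norm_div, Complex.norm_real, Real.norm_of_nonneg Real.pi_pos.le]
    exact div_le_self (norm_nonneg _) (by linarith [Real.pi_gt_three])
  refine (hd _).trans ?_
  exact enorm_integral_le_lintegral_enorm _

lemma Gop_meas (h : NW w) {f : ℂ → ℂ} (hf : Measurable f) (r : ℝ) : Measurable fun x : ℝ × ℝ => Gop w f r x.1 x.2 := by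
  unfold Gop
  have hm : Measurable fun x : (ℝ × ℝ) × ℝ => f (pt x.1.1 x.2) * kern0 w (pt (r * x.1.1) (x.1.2 - x.2)) := by
    refine (hf.comp ?_).mul (h.kern0_meas.comp ?_)
    · exact measurable_pt.comp ((measurable_fst.comp measurable_fst).prodMk measurable_snd)
    · exact measurable_pt.comp (((measurable_fst.comp measurable_fst).const_mul r).prodMk
        ((measurable_snd.comp measurable_fst).sub measurable_snd))
  exact (hm.stronglyMeasurable.integral_prod_right').measurable

end NW

end

section

namespace NW
variable {w : ℝ → ℝ}

lemma Gop_bd (h : NW w) {p : ℝ} (hp : 1 < p) : ∃ A : ℝ≥0, ∀ f : ℂ → ℂ, Measurable f → ∀ r ∈ Ioo (0:ℝ) 1, ∀ s ∈ Ioo (0:ℝ) 1,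
    ∫⁻ θ, ‖Gop w f r s θ‖ₑ ^ p ∂cm ≤ A * Mr w r s ^ p * ∫⁻ t, ‖f (pt s t)‖ₑ ^ p ∂cm := by
  obtain ⟨A, hA⟩ := h.kern_mult hp
  have hp0 : 0 < p := by linarith
  refine ⟨A + 1, fun f hf r hr s hs => ?_⟩
  have hHr := h.hat1_pos hr.2
  have hrs0 : 0 < r * s := mul_pos hr.1 hs.1
  have hrs1 : r * s < 1 := by nlinarith [hr.1, hr.2, hs.1, hs.2]
  have hg : Measurable fun t => f (pt s t) := hf.comp (continuous_pt2 s).measurable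
  have hMpos : Mr w r s ≠ 0 := by
    simp only [Mr, ne_eq, ENNReal.ofReal_eq_zero, not_le]
    exact inv_pos.2 (lt_max_of_lt_left hHr)
  by_cases hN : ∫⁻ t, ‖f (pt s t)‖ₑ ^ p ∂cm = ⊤
  · rw [hN, ENNReal.mul_top]
    · exact le_top
    · refine mul_ne_zero (by simp) ?_
      have : 0 < Mr w r s ^ p := ENNReal.rpow_pos (pos_iff_ne_zero.2 hMpos) ENNReal.ofReal_ne_top
      exact this.ne'
  · have hgi : Integrable (fun t => f (pt s t)) cm := by
      refine ⟨hg.aestronglyMeasurable, ?_⟩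
      have hw := wJ cm hp (f := fun t => ‖f (pt s t)‖ₑ) (c := fun _ => 1) hg.enorm.aemeasurable aemeasurable_const
      simp only [mul_one, lintegral_const, cm_univ, one_mul] at hw
      have hlt := hw.trans_lt (ENNReal.mul_lt_top (lt_top_iff_ne_top.2 hN)
        (ENNReal.rpow_lt_top_of_nonneg (by linarith) ENNReal.ofReal_ne_top))
      by_contra hne
      rw [HasFiniteIntegral, not_lt, top_le_iff] at hne
      rw [hne, ENNReal.top_rpow_of_pos hp0] at hlt
      exact lt_irrefl _ hlt
    have h1 := hA (r * s) hrs0.le hrs1 _ hg hgi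
    have e : ∀ θ, Gop w f r s θ = ∫ t, f (pt s t) * kern w (pt (r * s) (θ - t)) ∂cm := by
      intro θ
      unfold Gop
      congr 1; ext t
      rw [kern0, indicator_of_mem]
      rw [mem_ball_zero_iff, norm_pt, abs_of_pos hrs0]; exact hrs1
    simp_rw [e]
    refine h1.trans ?_
    gcongr
    · exact_mod_cast (by simp : A ≤ A + 1)
    · unfold Mr
      gcongr
      refine max_le (h.hat1_anti ?_) (h.hat1_anti ?_)
      · nlinarith [hr.1, hr.2, hs.1, hs.2]
      · nlinarith [hr.1, hr.2, hs.1, hs.2]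

lemma Mr_ne (h : NW w) {r : ℝ} (hr : r < 1) (s : ℝ) : Mr w r s ≠ 0 := by
  have hHr := h.hat1_pos hr
  simp only [Mr, ne_eq, ENNReal.ofReal_eq_zero, not_le]
  exact inv_pos.2 (lt_max_of_lt_left hHr)

lemma schur1 (h : NW w) {p b τ : ℝ} (hp : 1 < p) (hb0 : 0 < b) (hb1 : b < 1) (hbτ : b * (p-1) = τ) :
    ∃ A : ℝ≥0, ∀ f : ℂ → ℂ, Measurable f → ∫⁻ z, ‖f z‖ₑ ∂(muW w) < ⊤ → ∀ r ∈ Ioo (0:ℝ) 1,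
    ∫⁻ θ, ‖Pg w f (pt r θ)‖ₑ ^ p ∂cm ≤ A * (hpw w (-τ) r *
      ∫⁻ s, Mr w r s * hpw w τ s * ∫⁻ t, ‖f (pt s t)‖ₑ ^ p ∂cm ∂(mW w)) := by
  obtain ⟨A, hA⟩ := h.Gop_bd hp
  have hfin := h.finm
  have hp0 : 0 < p := by linarith
  have hp1 : 0 < p - 1 := by linarith
  refine ⟨A * (Real.toNNReal (1/(1-b) + 1/b)) ^ (p-1), fun f hf hL r hr => ?_⟩
  have hGm := h.Gop_meas hf r
  have hMm : Measurable fun s => Mr w r s := h.Mr_meas.comp (measurable_const.prodMk measurable_id)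
  have hNm : Measurable fun s => ∫⁻ t, ‖f (pt s t)‖ₑ ^ p ∂cm :=
    ((hf.comp measurable_pt).enorm.pow_const p).lintegral_prod_right'
  set D : ℝ≥0∞ := ENNReal.ofReal (1/(1-b) + 1/b) with hD
  have hpt : ∀ θ, ‖Pg w f (pt r θ)‖ₑ ^ p ≤
      (∫⁻ s, ‖Gop w f r s θ‖ₑ ^ p * (Mr w r s ^ (1-p) * hpw w τ s) ∂(mW w)) * (D ^ (p-1) * hpw w (-τ) r) := by
    intro θ
    refine (ENNReal.rpow_le_rpow (h.Pg_le hf hL hr θ) hp0.le).trans ?_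
    have hGθ : Measurable fun s => ‖Gop w f r s θ‖ₑ := (hGm.comp (measurable_id.prodMk measurable_const)).enorm
    have hw := wJ (mW w) hp (f := fun s => ‖Gop w f r s θ‖ₑ * ((Mr w r s)⁻¹ * hpw w b s))
      (c := fun s => Mr w r s * hpw w (-b) s)
      (hGθ.mul (hMm.inv.mul (h.hpw_meas b))).aemeasurable (hMm.mul (h.hpw_meas _)).aemeasurable
    have e1 : ∫⁻ s, ‖Gop w f r s θ‖ₑ * ((Mr w r s)⁻¹ * hpw w b s) * (Mr w r s * hpw w (-b) s) ∂(mW w) =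
        ∫⁻ s, ‖Gop w f r s θ‖ₑ ∂(mW w) := by
      refine lintegral_congr_ae ?_
      filter_upwards [h.mW_ae] with s hs
      have : (Mr w r s)⁻¹ * hpw w b s * (Mr w r s * hpw w (-b) s) = 1 := by
        rw [mul_mul_mul_comm, h.hpw_add hs.2, add_neg_cancel, h.hpw_zero,
          ENNReal.inv_mul_cancel (h.Mr_ne hr.2 s) ENNReal.ofReal_ne_top, mul_one]
      rw [mul_assoc, this, mul_one]
    have e2 : ∫⁻ s, (‖Gop w f r s θ‖ₑ * ((Mr w r s)⁻¹ * hpw w b s))^p * (Mr w r s * hpw w (-b) s) ∂(mW w) =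
        ∫⁻ s, ‖Gop w f r s θ‖ₑ ^ p * (Mr w r s ^ (1-p) * hpw w τ s) ∂(mW w) := by
      refine lintegral_congr_ae ?_
      filter_upwards [h.mW_ae] with s hs
      rw [ENNReal.mul_rpow_of_nonneg _ _ hp0.le, ENNReal.mul_rpow_of_nonneg _ _ hp0.le, mul_assoc,
        mul_mul_mul_comm, h.hpw_pow hs.2, h.hpw_add hs.2, ENNReal.inv_rpow, ← ENNReal.rpow_neg]
      congr 2
      · conv_lhs => rw [← ENNReal.rpow_one (Mr w r s), ← ENNReal.rpow_mul]
        rw [← ENNReal.rpow_add _ _ (h.Mr_ne hr.2 s) ENNReal.ofReal_ne_top]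
        congr 1; ring
      · congr 1; rw [← hbτ]; ring
    rw [e1, e2] at hw
    refine hw.trans ?_
    gcongr
    refine (ENNReal.rpow_le_rpow (h.Mr_int hb0 hb1 hr.2) hp1.le).trans (le_of_eq ?_)
    rw [ENNReal.mul_rpow_of_nonneg _ _ hp1.le, h.hpw_pow hr.2]
    congr 2; rw [← hbτ]; ring
  have hDne : D ^ (p-1) * hpw w (-τ) r ≠ ⊤ :=
    ENNReal.mul_ne_top (ENNReal.rpow_ne_top_of_nonneg hp1.le ENNReal.ofReal_ne_top) ENNReal.ofReal_ne_top
  have hswap : ∫⁻ θ, ∫⁻ s, ‖Gop w f r s θ‖ₑ ^ p * (Mr w r s ^ (1-p) * hpw w τ s) ∂(mW w) ∂cm ≤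
      ∫⁻ s, A * (Mr w r s * hpw w τ s * ∫⁻ t, ‖f (pt s t)‖ₑ ^ p ∂cm) ∂(mW w) := by
    rw [lintegral_lintegral_swap]
    · refine lintegral_mono_ae ?_
      filter_upwards [h.mW_ae] with s hs
      have hGs : Measurable fun θ => ‖Gop w f r s θ‖ₑ ^ p :=
        (hGm.comp (measurable_const.prodMk measurable_id)).enorm.pow_const p
      rw [lintegral_mul_const _ hGs]
      refine (mul_le_mul_left (hA f hf r hr s hs) _).trans (le_of_eq ?_)
      have : Mr w r s ^ p * Mr w r s ^ (1-p) = Mr w r s := by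
        rw [← ENNReal.rpow_add _ _ (h.Mr_ne hr.2 s) ENNReal.ofReal_ne_top, add_sub_cancel, ENNReal.rpow_one]
      calc _ = A * ((Mr w r s ^ p * Mr w r s ^ (1-p)) * hpw w τ s * ∫⁻ t, ‖f (pt s t)‖ₑ ^ p ∂cm) := by ring
        _ = _ := by rw [this]
    · refine Measurable.aemeasurable ?_
      refine Measurable.mul ?_ ?_
      · exact ((hGm.comp measurable_swap).enorm.pow_const p)
      · exact ((hMm.pow_const _).mul (h.hpw_meas τ)).comp measurable_snd
  calc _ ≤ ∫⁻ θ, (∫⁻ s, ‖Gop w f r s θ‖ₑ ^ p * (Mr w r s ^ (1-p) * hpw w τ s) ∂(mW w)) *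
        (D ^ (p-1) * hpw w (-τ) r) ∂cm := lintegral_mono hpt
    _ = (∫⁻ θ, ∫⁻ s, ‖Gop w f r s θ‖ₑ ^ p * (Mr w r s ^ (1-p) * hpw w τ s) ∂(mW w) ∂cm) *
        (D ^ (p-1) * hpw w (-τ) r) := lintegral_mul_const' _ _ hDne
    _ ≤ (∫⁻ s, A * (Mr w r s * hpw w τ s * ∫⁻ t, ‖f (pt s t)‖ₑ ^ p ∂cm) ∂(mW w)) *
        (D ^ (p-1) * hpw w (-τ) r) := by gcongr
    _ = _ := by
        rw [lintegral_const_mul' _ _ ENNReal.coe_ne_top]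
        push_cast
        rw [ENNReal.coe_rpow_of_nonneg _ hp1.le, hD]
        show _ = A * ENNReal.ofReal (1/(1-b) + 1/b) ^ (p-1) * _
        ring

lemma schur2 (h : NW w) {p α : ℝ} (hp : 1 < p) (hα : -1 < α) (hαp : α < p - 1) :
    ∃ A : ℝ≥0, ∀ f : ℂ → ℂ, Measurable f → ∫⁻ z, ‖f z‖ₑ ∂(muW w) < ⊤ →
    ∫⁻ r, hpw w α r * ∫⁻ θ, ‖Pg w f (pt r θ)‖ₑ ^ p ∂cm ∂(mW w) ≤
      A * ∫⁻ s, hpw w α s * ∫⁻ t, ‖f (pt s t)‖ₑ ^ p ∂cm ∂(mW w) := by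
  have hfin := h.finm
  have hp1 : 0 < p - 1 := by linarith
  obtain ⟨τ, h1, h2⟩ := exists_between (show max 0 α < min (p-1) (α+1) by
    rw [max_lt_iff, lt_min_iff, lt_min_iff]; refine ⟨⟨?_, ?_⟩, ?_, ?_⟩ <;> linarith)
  rw [max_lt_iff] at h1
  rw [lt_min_iff] at h2
  obtain ⟨A, hA⟩ := h.schur1 (b := τ/(p-1)) (τ := τ) hp (div_pos h1.1 hp1) ((div_lt_one hp1).2 h2.1)
    (by field_simp)
  set e := τ - α with he
  have he0 : 0 < e := by linarith
  have he1 : e < 1 := by linarith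
  refine ⟨A * Real.toNNReal (1/(1-e) + 1/e), fun f hf hL => ?_⟩
  set N : ℝ → ℝ≥0∞ := fun s => ∫⁻ t, ‖f (pt s t)‖ₑ ^ p ∂cm with hNdef
  have hNm : Measurable N :=
    ((hf.comp measurable_pt).enorm.pow_const p).lintegral_prod_right'
  calc _ ≤ ∫⁻ r, A * ∫⁻ s, hpw w (-e) r * (Mr w r s * hpw w τ s * N s) ∂(mW w) ∂(mW w) := by
        refine lintegral_mono_ae ?_
        filter_upwards [h.mW_ae] with r hr
        refine (mul_le_mul_right (hA f hf hL r hr) _).trans (le_of_eq ?_)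
        rw [lintegral_const_mul' _ _ (by exact ENNReal.ofReal_ne_top)]
        have : hpw w α r * hpw w (-τ) r = hpw w (-e) r := by
          rw [h.hpw_add hr.2]; congr 1; rw [he]; ring
        rw [← this]; ring
    _ = A * ∫⁻ r, ∫⁻ s, hpw w (-e) r * (Mr w r s * hpw w τ s * N s) ∂(mW w) ∂(mW w) :=
        lintegral_const_mul' _ _ ENNReal.coe_ne_top
    _ = A * ∫⁻ s, ∫⁻ r, hpw w (-e) r * (Mr w r s * hpw w τ s * N s) ∂(mW w) ∂(mW w) := by
        rw [lintegral_lintegral_swap]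
        refine Measurable.aemeasurable ?_
        exact ((h.hpw_meas (-e)).comp measurable_fst).mul
          ((h.Mr_meas.mul ((h.hpw_meas τ).comp measurable_snd)).mul (hNm.comp measurable_snd))
    _ ≤ A * ∫⁻ s, ENNReal.ofReal (1/(1-e) + 1/e) * (hpw w α s * N s) ∂(mW w) := by
        gcongr A * ?_
        refine lintegral_mono_ae ?_
        filter_upwards [h.mW_ae] with s hs
        have hsym : ∀ r, hpw w (-e) r * (Mr w r s * hpw w τ s * N s) = (Mr w s r * hpw w (-e) r) * (hpw w τ s * N s) := by
          intro r
          have : Mr w r s = Mr w s r := by unfold Mr; rw [max_comm]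
          rw [this]; ring
        simp_rw [hsym]
        have hMm : Measurable fun r => Mr w s r * hpw w (-e) r :=
          (h.Mr_meas.comp (measurable_const.prodMk measurable_id)).mul (h.hpw_meas _)
        rw [lintegral_mul_const _ hMm]
        refine (mul_le_mul_left (h.Mr_int he0 he1 hs.2) _).trans (le_of_eq ?_)
        have : hpw w (-e) s * hpw w τ s = hpw w α s := by
          rw [h.hpw_add hs.2]; congr 1; rw [he]; ring
        rw [← this]; ring
    _ = _ := by
        rw [lintegral_const_mul' _ _ ENNReal.ofReal_ne_top, ← mul_assoc]
        push_cast; rfl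

lemma suff (h : NW w) {p α : ℝ} (hp : 1 < p) (hα : -1 < α) (hαp : α < p - 1) :
    PwBounded p w (fun s => w s * hat1 w s ^ α) := by
  obtain ⟨A, hA⟩ := h.schur2 hp hα hαp
  have hp0 : 0 < p := by linarith
  refine ⟨((A:ℝ) + 1) ^ (1/p), by positivity, fun f hf hLp => ?_⟩
  have hI : ∫⁻ z in ball (0:ℂ) 1, ENNReal.ofReal (‖f z‖ ^ p * (w ‖z‖ * hat1 w ‖z‖ ^ α)) < ⊤ := by
    by_contra hne
    rw [not_lt, top_le_iff] at hne
    unfold LpC at hLp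
    simp only [hne] at hLp
    rw [ENNReal.top_div_of_ne_top ENNReal.ofReal_ne_top, ENNReal.top_rpow_of_pos (by positivity)] at hLp
    exact lt_irrefl _ hLp
  have hL := h.f_L1 hf hp hαp hI
  constructor
  · filter_upwards [ae_restrict_mem measurableSet_ball] with z hz
    exact h.abs_conv2 hf hL (mem_ball_zero_iff.1 hz)
  · have e : LpC p (fun s => w s * hat1 w s ^ α) (Pw w f) = LpC p (fun s => w s * hat1 w s ^ α) (Pg w f) := by
      unfold LpC
      congr 2
      refine setLIntegral_congr_fun measurableSet_ball fun z hz => ?_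
      show ENNReal.ofReal (‖Pw w f z‖ ^ p * (w ‖z‖ * hat1 w ‖z‖ ^ α)) = _
      rw [h.Pw_eq (mem_ball_zero_iff.1 hz)]
    rw [e]
    unfold LpC
    rw [← ENNReal.ofReal_rpow_of_nonneg (by positivity) (by positivity),
      ← ENNReal.mul_rpow_of_nonneg _ _ (by positivity)]
    refine ENNReal.rpow_le_rpow ?_ (by positivity)
    rw [← mul_div_assoc]
    refine ENNReal.div_le_div_right ?_ _
    rw [h.lp_eq (h.Pg_meas hf) hp, h.lp_eq hf hp]
    refine (hA f hf hL).trans ?_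
    gcongr
    rw [← ENNReal.ofReal_coe_nnreal]
    exact ENNReal.ofReal_le_ofReal (by linarith)

end NW

end

section

lemma exists_NW {w : ℝ → ℝ} (hw : IsRadialWeight w) (hD : Dhat w) :
    ∃ w', NW w' ∧ ∀ᵐ s ∂(volume.restrict (Ioo (0:ℝ) 1)), w s = w' s := by
  obtain ⟨h1, h2, h3⟩ := hw
  have h2' : IntegrableOn w (Ioo (0:ℝ) 1) := h2.mono_set Ioo_subset_Ico_self
  set v := h2'.1.mk w with hv
  have hvm : Measurable v := h2'.1.stronglyMeasurable_mk.measurable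
  have hae : ∀ᵐ s ∂(volume.restrict (Ioo (0:ℝ) 1)), w s = v s := h2'.1.ae_eq_mk
  set w' : ℝ → ℝ := (Ioo (0:ℝ) 1).indicator fun s => max 0 (v s) with hw'
  have hE : ∀ᵐ s ∂(volume.restrict (Ioo (0:ℝ) 1)), w s = w' s := by
    filter_upwards [hae, ae_restrict_mem measurableSet_Ioo] with s hs hs2
    rw [hw', indicator_of_mem hs2, ← hs, max_eq_right (h1 s ⟨hs2.1.le, hs2.2⟩)]
  have hhat : ∀ r, 0 ≤ r → hatw w r = hatw w' r := by
    intro r hr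
    unfold hatw
    exact integral_congr_ae (ae_restrict_of_ae_restrict_of_subset (Ioo_subset_Ioo_left hr) hE)
  refine ⟨w', ⟨?_, ?_, ?_, ?_, ?_, ?_⟩, hE⟩
  · exact (measurable_const.max hvm).indicator measurableSet_Ioo
  · intro s; exact indicator_nonneg (fun _ _ => le_max_left _ _) s
  · intro s hs; exact indicator_of_notMem hs _
  · have : IntegrableOn w' (Ioo (0:ℝ) 1) := h2'.congr hE
    rw [← integrable_indicator_iff measurableSet_Ioo] at this
    rwa [hw', indicator_indicator, inter_self] at this
  · intro r hr; rw [← hhat r hr.1]; exact h3 r hr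
  · obtain ⟨C, hC⟩ := hD
    refine ⟨C, fun r hr => ?_⟩
    rw [← hhat r hr.1, ← hhat _ (by linarith [hr.1])]
    exact hC r hr

section transfer
variable {w w' : ℝ → ℝ}

lemma hat1_tr (hE : ∀ᵐ s ∂(volume.restrict (Ioo (0:ℝ) 1)), w s = w' s) {r : ℝ} (hr : 0 ≤ r) : hat1 w r = hat1 w' r := by
  unfold hat1
  refine integral_congr_ae (ae_restrict_of_ae_restrict_of_subset (Ioo_subset_Ioo_left hr) ?_)
  filter_upwards [hE] with s hs
  rw [hs]

lemma moment_tr (hE : ∀ᵐ s ∂(volume.restrict (Ioo (0:ℝ) 1)), w s = w' s) (n : ℕ) : moment w n = moment w' n := by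
  unfold moment
  refine integral_congr_ae ?_
  filter_upwards [hE] with s hs
  rw [hs]

lemma Bker_tr (hE : ∀ᵐ s ∂(volume.restrict (Ioo (0:ℝ) 1)), w s = w' s) : Bker w = Bker w' := by
  ext z ζ
  unfold Bker
  simp_rw [moment_tr hE]

lemma LpC_tr (hE : ∀ᵐ s ∂(volume.restrict (Ioo (0:ℝ) 1)), w s = w' s) (p α : ℝ) (f : ℂ → ℂ) : LpC p (fun s => w s * hat1 w s ^ α) f =
    LpC p (fun s => w' s * hat1 w' s ^ α) f := by
  unfold LpC
  congr 2
  refine lintegral_congr_ae ?_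
  filter_upwards [ae_norm hE] with z hz
  rw [hz, hat1_tr hE (norm_nonneg z)]

lemma Pw_tr (hE : ∀ᵐ s ∂(volume.restrict (Ioo (0:ℝ) 1)), w s = w' s) : Pw w = Pw w' := by
  ext f z
  unfold Pw
  congr 1
  refine integral_congr_ae ?_
  filter_upwards [ae_norm hE] with z hz
  rw [hz, Bker_tr hE]

lemma abs_tr (hE : ∀ᵐ s ∂(volume.restrict (Ioo (0:ℝ) 1)), w s = w' s) (f : ℂ → ℂ) (z : ℂ) :
    ∫⁻ ζ in Metric.ball (0:ℂ) 1, ENNReal.ofReal (‖f ζ‖ * ‖Bker w z ζ‖ * w ‖ζ‖) =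
    ∫⁻ ζ in Metric.ball (0:ℂ) 1, ENNReal.ofReal (‖f ζ‖ * ‖Bker w' z ζ‖ * w' ‖ζ‖) := by
  refine lintegral_congr_ae ?_
  filter_upwards [ae_norm hE] with z hz
  rw [hz, Bker_tr hE]

lemma PwB_tr (hE : ∀ᵐ s ∂(volume.restrict (Ioo (0:ℝ) 1)), w s = w' s) (p α : ℝ) : PwBounded p w (fun s => w s * hat1 w s ^ α) ↔
    PwBounded p w' (fun s => w' s * hat1 w' s ^ α) := by
  unfold PwBounded
  simp_rw [LpC_tr hE, Pw_tr hE, abs_tr hE]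

lemma ApE_tr (hE : ∀ᵐ s ∂(volume.restrict (Ioo (0:ℝ) 1)), w s = w' s) (p α : ℝ) : ApE p w (fun s => w s * hat1 w s ^ α) =
    ApE p w' (fun s => w' s * hat1 w' s ^ α) := by
  unfold ApE
  refine iSup_congr fun r => iSup_congr fun hr => ?_
  have hEr : ∀ᵐ s ∂(volume.restrict (Ioo r 1)), w s = w' s ∧ s ∈ Ioo r 1 := by
    filter_upwards [ae_restrict_of_ae_restrict_of_subset (Ioo_subset_Ioo_left hr.1) hE,
      ae_restrict_mem measurableSet_Ioo] with s h1 h2 using ⟨h1, h2⟩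
  rw [hat1_tr hE hr.1]
  congr 3
  · refine lintegral_congr_ae ?_
    filter_upwards [hEr] with s hs
    rw [hs.1, hat1_tr hE (hr.1.trans hs.2.1.le)]
  · refine lintegral_congr_ae ?_
    filter_upwards [hEr] with s hs
    unfold sigmaE
    simp only []
    rw [hs.1, hat1_tr hE (hr.1.trans hs.2.1.le)]
end transfer

end

/-- Theorem 1, first part. Let `1 < p < ∞`, `-1 < α < ∞`, `ω ∈ D̂` a radial
weight and `ν = ω ω̂₁^α`. Then `P_ω` is bounded on `L^p_ν` if and only if `A_p(ω,ν) < ∞`,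
and this holds if and only if `α < p - 1`. -/
theorem forelli_rudin_type (p α : ℝ) (hp : 1 < p) (hα : -1 < α) (w : ℝ → ℝ)
    (hw : IsRadialWeight w) (hwD : Dhat w) :
    (PwBounded p w (fun s => w s * hat1 w s ^ α) ↔
      ApE p w (fun s => w s * hat1 w s ^ α) < ⊤) ∧
    (ApE p w (fun s => w s * hat1 w s ^ α) < ⊤ ↔ α < p - 1) := by
  obtain ⟨w', h, hE⟩ := exists_NW hw hwD
  rw [PwB_tr hE, ApE_tr hE, h.ApE_iff hp hα]
  exact ⟨⟨fun hB => nec h hp hB, fun hlt => h.suff hp hα hlt⟩, Iff.rfl⟩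

end
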